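/- Let G be a finitely presented metabelian group, let δ be the Dehn function of a finite presentation of G, and let δ̃ be the relative Dehn function of a finite relative presentation of G in the variety of metabelian groups. Then δ̃(n) ≼ δ(n), and δ(n) ≼ max{(δ̃(n³))³, 2ⁿ} (the maximum taken pointwise in n). -/

import Mathlib

/-!
A word that is trivial in `G` has a filling of exponential area, so that `δ ≼ 2ⁿ` holds for every
finitely presented metabelian group.

The geometric input is Bieri–Strebel tameness. For a character `v` of the free group, finitely many
relators have bounded height, so the action of the metabelian kernel on the cosets of the elements
supported over one half-space of `v` glues, away from the boundary, to the analogous action over the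
opposite half-space. If neither half-space carried the whole kernel, this would produce a
representation killing the relators in which two elements of the kernel fail to commute. Hence `v`
or `-v` is tame: modulo the relators, a commutator of letters is a product of conjugates of such
commutators by words of definite height. Compactness of the unit sphere makes the constants uniform,
and moving by a bounded word against the direction of the exponent vector shortens it. By induction
on its Euclidean norm, the conjugates of commutators of letters commute at a cost exponential in the
length of the conjugating words, and at that cost they depend only on the exponent vectors of these
words.

A trivial word, corrected by a trivial word of linear area with the same exponent vector, is a
product of such conjugates, that is, a formal sum of monomials in the letters times pairs of
letters. The formal sums of the relations form a module over the monomials. Numbering the monomials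
by products of primes turns Gröbner reduction by leading terms into a rewriting in which the weight
of a formal sum stays exponentially bounded, and each reduction step subtracts a conjugate of one of
finitely many relations.

The bound `δ̃ ≼ δ` follows by carrying fillings across an isomorphism of the two groups.
-/

open Function

/-- The length of the reduced word representing an element of a free group. -/
noncomputable def freeNorm {X : Type*} (w : FreeGroup X) : ℕ :=
  letI := Classical.decEq X
  w.toWord.length

/-- `w` equals a product of exactly `N` conjugates of elements of `R ∪ R⁻¹`. -/
def AreaIs {G : Type*} [Group G] (R : Set G) (w : G) (N : ℕ) : Prop :=
  ∃ r f : Fin N → G, (∀ i, r i ∈ R ∨ (r i)⁻¹ ∈ R) ∧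
    w = (List.ofFn fun i => (f i)⁻¹ * r i * f i).prod

/-- The area of `w` with respect to the relators `R` is at most `N`. -/
def AreaLe {G : Type*} [Group G] (R : Set G) (w : G) (N : ℕ) : Prop :=
  ∃ N' ≤ N, AreaIs R w N'

/-- `f ≼ g` : there is `C > 0` with `f n ≤ C * g (C * n) + C * n + C` for all `n`. -/
def Dominates (f g : ℕ → ℕ) : Prop :=
  ∃ C : ℕ, 0 < C ∧ ∀ n, f n ≤ C * g (C * n) + C * n + C

/-- `f ≈ g` : mutual domination. -/
def DehnEquiv (f g : ℕ → ℕ) : Prop := Dominates f g ∧ Dominates g f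

/-- `δ` is the Dehn function of the presentation with relator set `R`. -/
def IsDehnFunctionOf {X : Type*} (R : Set (FreeGroup X)) (δ : ℕ → ℕ) : Prop :=
  ∀ n, IsLeast {N | ∀ w ∈ Subgroup.normalClosure R, freeNorm w ≤ n → AreaLe R w N} (δ n)

/-- A group is metabelian if its derived subgroup is abelian. -/
def IsMetabelian (G : Type*) [Group G] : Prop :=
  ∀ a b : G, a ∈ commutator G → b ∈ commutator G → a * b = b * a

instance derivedSeriesNormalInst {G : Type*} [Group G] (n : ℕ) : (derivedSeries G n).Normal :=
  derivedSeries_normal G n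

/-- The free metabelian group on `X`: the free group modulo its second derived subgroup. -/
abbrev FreeMetabelian (X : Type*) := FreeGroup X ⧸ derivedSeries (FreeGroup X) 2

/-- The word length of `w` in the free metabelian group is at most `n`. -/
def mNormLe {X : Type*} (w : FreeMetabelian X) (n : ℕ) : Prop :=
  ∃ v : FreeGroup X, QuotientGroup.mk' (derivedSeries (FreeGroup X) 2) v = w ∧ freeNorm v ≤ n

/-- `δ` is the relative Dehn function (in the variety of metabelian groups) of the
relative presentation with relator set `R`. -/
def IsRelDehnFunctionOf {X : Type*} (R : Set (FreeMetabelian X)) (δ : ℕ → ℕ) : Prop :=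
  ∀ n, IsLeast {N | ∀ w ∈ Subgroup.normalClosure R, mNormLe w n → AreaLe R w N} (δ n)

/-- The paper's commutator convention: `[x, y] = x⁻¹ * y⁻¹ * x * y`. -/
def pcomm {G : Type*} [Group G] (x y : G) : G := x⁻¹ * y⁻¹ * x * y

/-- A group has torsion-free rank `k` if it has a finite-index subgroup isomorphic to `ℤ^k`. -/
def HasTFRank (Q : Type*) [Group Q] (k : ℕ) : Prop :=
  ∃ H : Subgroup Q, H.index ≠ 0 ∧ Nonempty (H ≃* Multiplicative (Fin k → ℤ))

/-- `G ⧸ A` is abelian and has torsion-free rank `j`. -/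
def QuotientRankProp {G : Type*} [Group G] (A : Subgroup G) [A.Normal] (j : ℕ) : Prop :=
  (∀ x y : G ⧸ A, x * y = y * x) ∧ HasTFRank (G ⧸ A) j

/-- The set of torsion-free ranks of quotients `G ⧸ A` by abelian normal subgroups `A`
with `G ⧸ A` abelian. -/
def abelianRankSet (G : Type*) [Group G] : Set ℕ :=
  {j | ∃ A : Subgroup G, ∃ h : A.Normal, (∀ x y : G, x ∈ A → y ∈ A → x * y = y * x) ∧
    @QuotientRankProp G _ A h j}

section Area

open scoped Pointwise

variable {G : Type*} [Group G] {R : Set G}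

theorem areaLe_iff_exists_list {w : G} {N : ℕ} : AreaLe R w N ↔
    ∃ L : List G, (∀ x ∈ L, x ∈ Group.conjugatesOfSet (R ∪ R⁻¹)) ∧ L.length ≤ N ∧ L.prod = w := by
  simp only [Group.mem_conjugatesOfSet_iff, isConj_iff]
  constructor
  · rintro ⟨N', hN, r, f, hr, rfl⟩
    refine ⟨List.ofFn fun i => (f i)⁻¹ * r i * f i, fun x hx => ?_, by simpa using hN, rfl⟩
    obtain ⟨i, rfl⟩ := (List.mem_ofFn' _ _).1 hx
    exact ⟨r i, hr i, (f i)⁻¹, by rw [inv_inv]⟩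
  · rintro ⟨L, hL, hN, rfl⟩
    choose r hr f hf using fun i : Fin L.length => hL _ (L.get_mem i)
    refine ⟨L.length, hN, r, fun i => (f i)⁻¹, hr, ?_⟩
    simp only [inv_inv, hf, List.ofFn_get]

theorem inv_mem_conjugatesOfSet_union_inv {x : G} (hx : x ∈ Group.conjugatesOfSet (R ∪ R⁻¹)) :
    x⁻¹ ∈ Group.conjugatesOfSet (R ∪ R⁻¹) := by
  obtain ⟨r, hr, hrx⟩ := Group.mem_conjugatesOfSet_iff.1 hx
  obtain ⟨c, rfl⟩ := isConj_iff.1 hrx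
  exact Group.mem_conjugatesOfSet_iff.2
    ⟨r⁻¹, by simpa [or_comm] using hr, isConj_iff.2 ⟨c, conj_inv.symm⟩⟩

namespace AreaLe

theorem one (N : ℕ) : AreaLe R (1 : G) N :=
  areaLe_iff_exists_list.2 ⟨[], by simp, by simp, by simp⟩

theorem mono {w : G} {N M : ℕ} (h : AreaLe R w N) (hNM : N ≤ M) : AreaLe R w M :=
  let ⟨N', hN', hw⟩ := h
  ⟨N', hN'.trans hNM, hw⟩

theorem mul {a b : G} {N M : ℕ} (ha : AreaLe R a N) (hb : AreaLe R b M) :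
    AreaLe R (a * b) (N + M) := by
  obtain ⟨L, hL, hLN, rfl⟩ := areaLe_iff_exists_list.1 ha
  obtain ⟨L', hL', hLM, rfl⟩ := areaLe_iff_exists_list.1 hb
  refine areaLe_iff_exists_list.2 ⟨L ++ L', ?_, ?_, List.prod_append⟩
  · exact fun x hx => (List.mem_append.1 hx).elim (hL x) (hL' x)
  · rw [List.length_append]; exact Nat.add_le_add hLN hLM

theorem inv {a : G} {N : ℕ} (ha : AreaLe R a N) : AreaLe R a⁻¹ N := by
  obtain ⟨L, hL, hLN, rfl⟩ := areaLe_iff_exists_list.1 ha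
  refine areaLe_iff_exists_list.2 ⟨(L.map (·⁻¹)).reverse, ?_, by simpa, L.prod_inv_reverse.symm⟩
  simp only [List.mem_reverse, List.forall_mem_map]
  exact fun x hx => inv_mem_conjugatesOfSet_union_inv (hL x hx)

theorem conj {a : G} {N : ℕ} (ha : AreaLe R a N) (g : G) : AreaLe R (g * a * g⁻¹) N := by
  obtain ⟨L, hL, hLN, rfl⟩ := areaLe_iff_exists_list.1 ha
  refine areaLe_iff_exists_list.2 ⟨L.map (MulAut.conj g), ?_, by simpa, ?_⟩
  · simp only [List.forall_mem_map]
    exact fun x hx => Group.conj_mem_conjugatesOfSet (hL x hx)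
  · rw [← map_list_prod, MulAut.conj_apply]

theorem of_mem {a : G} (ha : a ∈ R) : AreaLe R a 1 :=
  areaLe_iff_exists_list.2
    ⟨[a], List.forall_mem_singleton.2 (Group.subset_conjugatesOfSet (Or.inl ha)), by simp, by simp⟩

theorem exists_of_mem_normalClosure {a : G} (ha : a ∈ Subgroup.normalClosure R) :
    ∃ N, AreaLe R a N := by
  induction ha using Subgroup.closure_induction with
  | mem x hx =>
    obtain ⟨r, hr, hrx⟩ := Group.mem_conjugatesOfSet_iff.1 hx
    obtain ⟨c, rfl⟩ := isConj_iff.1 hrx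
    exact ⟨1, (of_mem hr).conj c⟩
  | one => exact ⟨0, one 0⟩
  | mul a b _ _ ha hb =>
    obtain ⟨⟨N, hN⟩, ⟨M, hM⟩⟩ := And.intro ha hb
    exact ⟨N + M, hN.mul hM⟩
  | inv a _ ha => exact ha.imp fun _ h => h.inv

theorem mem_normalClosure {a : G} {N : ℕ} (ha : AreaLe R a N) : a ∈ Subgroup.normalClosure R := by
  obtain ⟨L, hL, -, rfl⟩ := areaLe_iff_exists_list.1 ha
  refine list_prod_mem fun x hx => ?_
  obtain ⟨r, hr, hrx⟩ := Group.mem_conjugatesOfSet_iff.1 (hL x hx)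
  obtain ⟨c, rfl⟩ := isConj_iff.1 hrx
  refine Subgroup.normalClosure_normal.conj_mem r ?_ c
  exact hr.elim (Subgroup.subset_normalClosure ·)
    fun h => inv_mem_iff.1 (Subgroup.subset_normalClosure (Set.mem_inv.1 h))

theorem exists_of_forall_mem_normalClosure {ι : Type*} [Finite ι] {a : ι → G}
    (ha : ∀ i, a i ∈ Subgroup.normalClosure R) : ∃ N, ∀ i, AreaLe R (a i) N := by
  choose N hN using fun i => exists_of_mem_normalClosure (ha i)
  obtain ⟨M, hM⟩ := (Set.finite_range N).bddAbove
  exact ⟨M, fun i => (hN i).mono (hM ⟨i, rfl⟩)⟩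

theorem map {H : Type*} [Group H] {S : Set H} (φ : G →* H) {B : ℕ}
    (hB : ∀ r ∈ R, AreaLe S (φ r) B) {a : G} {N : ℕ} (ha : AreaLe R a N) :
    AreaLe S (φ a) (N * B) := by
  obtain ⟨L, hL, hLN, rfl⟩ := areaLe_iff_exists_list.1 ha
  suffices AreaLe S (φ L.prod) (L.length * B) from this.mono (Nat.mul_le_mul_right B hLN)
  clear ha hLN
  induction L with
  | nil => simpa using one _
  | cons x L ih =>
    obtain ⟨hx, hL'⟩ := List.forall_mem_cons.1 hL
    obtain ⟨r, hr, hrx⟩ := Group.mem_conjugatesOfSet_iff.1 hx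
    obtain ⟨c, rfl⟩ := isConj_iff.1 hrx
    have hφr : AreaLe S (φ r) B := hr.elim (hB r) fun h => by simpa using (hB _ h).inv
    simpa [add_mul, add_comm] using (hφr.conj (φ c)).mul (ih hL')

end AreaLe

/-- `a` and `b` are equal modulo `R` at cost `N`: the word `a * b⁻¹` has area at most `N`. -/
def AreaEq {G : Type*} [Group G] (R : Set G) (a b : G) (N : ℕ) : Prop := AreaLe R (a * b⁻¹) N

namespace AreaEq

variable {a b c d : G} {N M : ℕ}

theorem of_eq (h : a = b) (N : ℕ) : AreaEq R a b N := by
  subst h; simpa [AreaEq] using AreaLe.one N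

theorem refl (a : G) (N : ℕ) : AreaEq R a a N := of_eq rfl N

theorem mono (h : AreaEq R a b N) (hNM : N ≤ M) : AreaEq R a b M := AreaLe.mono h hNM

theorem symm (h : AreaEq R a b N) : AreaEq R b a N := by
  simpa [AreaEq] using AreaLe.inv h

theorem trans (h : AreaEq R a b N) (h' : AreaEq R b c M) : AreaEq R a c (N + M) := by
  simpa [AreaEq] using AreaLe.mul h h'

theorem mul_left (h : AreaEq R a b N) (c : G) : AreaEq R (c * a) (c * b) N := by
  simpa [AreaEq, mul_assoc] using AreaLe.conj h c

theorem mul_right (h : AreaEq R a b N) (c : G) : AreaEq R (a * c) (b * c) N := by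
  simpa [AreaEq, mul_assoc] using h

theorem mul (h : AreaEq R a b N) (h' : AreaEq R c d M) : AreaEq R (a * c) (b * d) (N + M) :=
  (h.mul_right c).trans (h'.mul_left b)

theorem inv (h : AreaEq R a b N) : AreaEq R a⁻¹ b⁻¹ N := by
  simpa [mul_assoc] using ((h.symm.mul_left a⁻¹).mul_right b⁻¹)

theorem conj (h : AreaEq R a b N) (g : G) :
    AreaEq R (MulAut.conj g a) (MulAut.conj g b) N := by
  simpa only [MulAut.conj_apply] using (h.mul_left g).mul_right g⁻¹

theorem areaLe (h : AreaEq R a b N) (hb : AreaLe R b M) : AreaLe R a (N + M) := by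
  simpa [AreaEq] using AreaLe.mul h hb

end AreaEq

theorem AreaLe.areaEq_one {a : G} {N : ℕ} (h : AreaLe R a N) : AreaEq R a 1 N := by
  simpa [AreaEq] using h

end Area

section FreeNorm

variable {X : Type*}

theorem freeNorm_eq_norm [DecidableEq X] (w : FreeGroup X) : freeNorm w = w.norm := by
  unfold freeNorm FreeGroup.norm
  congr!

theorem exists_mk_eq_length_eq_freeNorm (w : FreeGroup X) :
    ∃ L : List (X × Bool), FreeGroup.mk L = w ∧ L.length = freeNorm w := by
  classical
  exact ⟨w.toWord, FreeGroup.mk_toWord, by rw [freeNorm_eq_norm]; rfl⟩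

theorem freeNorm_mul_le (a b : FreeGroup X) : freeNorm (a * b) ≤ freeNorm a + freeNorm b := by
  classical
  simpa only [freeNorm_eq_norm] using FreeGroup.norm_mul_le a b

theorem freeNorm_inv (a : FreeGroup X) : freeNorm a⁻¹ = freeNorm a := by
  classical
  simp only [freeNorm_eq_norm, FreeGroup.norm_inv_eq]

theorem freeNorm_mk_le (L : List (X × Bool)) : freeNorm (FreeGroup.mk L) ≤ L.length := by
  classical
  rw [freeNorm_eq_norm]
  exact FreeGroup.norm_mk_le

theorem freeNorm_one : freeNorm (1 : FreeGroup X) = 0 := by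
  classical
  rw [freeNorm_eq_norm, FreeGroup.norm_one]

/-- The generator or inverse generator named by a letter of a word in a free group. -/
def letter (l : X × Bool) : FreeGroup X := FreeGroup.mk [l]

theorem mk_cons_eq (l : X × Bool) (L : List (X × Bool)) :
    FreeGroup.mk (l :: L) = letter l * FreeGroup.mk L := by
  simp [letter, FreeGroup.mul_mk]

theorem letter_true (x : X) : letter (x, true) = FreeGroup.of x := rfl

theorem letter_not (x : X) (b : Bool) : letter (x, !b) = (letter (x, b))⁻¹ := by
  simp [letter, FreeGroup.inv_mk, FreeGroup.invRev]

theorem letter_false (x : X) : letter (x, false) = (FreeGroup.of x)⁻¹ := letter_not x true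

theorem letter_induction {P : FreeGroup X → Prop} (one : P 1)
    (letter_mul : ∀ l g, P g → P (letter l * g)) (g : FreeGroup X) : P g := by
  obtain ⟨L, rfl, -⟩ := exists_mk_eq_length_eq_freeNorm g
  induction L with
  | nil => exact one
  | cons l L ih => rw [mk_cons_eq]; exact letter_mul l _ ih

theorem exists_freeNorm_map_le {Y : Type*} [Finite X] (φ : FreeGroup X →* FreeGroup Y) :
    ∃ C, ∀ w, freeNorm (φ w) ≤ C * freeNorm w := by
  obtain ⟨C, hC⟩ := (Set.finite_range fun l : X × Bool => freeNorm (φ (letter l))).bddAbove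
  refine ⟨C, fun w => ?_⟩
  obtain ⟨L, rfl, hL⟩ := exists_mk_eq_length_eq_freeNorm w
  rw [← hL]; clear hL
  induction L with
  | nil => rw [← FreeGroup.one_eq_mk, map_one, freeNorm_one]; exact Nat.zero_le _
  | cons l L ih =>
    have hl : freeNorm (φ (letter l)) ≤ C := hC ⟨l, rfl⟩
    calc freeNorm (φ (FreeGroup.mk (l :: L)))
        ≤ freeNorm (φ (letter l)) + freeNorm (φ (FreeGroup.mk L)) := by
          rw [mk_cons_eq, map_mul]; exact freeNorm_mul_le _ _
      _ ≤ C + C * L.length := Nat.add_le_add hl ih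
      _ = C * (l :: L).length := by rw [List.length_cons]; ring

theorem exists_areaEq_of_letters {H : Type*} [Group H] {S : Set H} [Finite X]
    (φ ψ : FreeGroup X →* H)
    (h : ∀ l, φ (letter l) * (ψ (letter l))⁻¹ ∈ Subgroup.normalClosure S) :
    ∃ C, ∀ w, AreaEq S (φ w) (ψ w) (freeNorm w * C) := by
  obtain ⟨C, hC⟩ := AreaLe.exists_of_forall_mem_normalClosure h
  refine ⟨C, fun w => ?_⟩
  obtain ⟨L, rfl, hL⟩ := exists_mk_eq_length_eq_freeNorm w
  rw [← hL]; clear hL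
  induction L with
  | nil => rw [← FreeGroup.one_eq_mk, map_one, map_one]; exact AreaEq.refl _ _
  | cons l L ih =>
    rw [mk_cons_eq, map_mul, map_mul, List.length_cons, add_mul, one_mul, add_comm]
    exact AreaEq.mul (hC l) ih

theorem exists_comp_eq_of_surjective {G H : Type*} [Group G] [Group H] {p : G →* H}
    (hp : Surjective p) (f : FreeGroup X →* H) : ∃ φ : FreeGroup X →* G, p.comp φ = f := by
  choose g hg using fun x => hp (f (FreeGroup.of x))
  exact ⟨FreeGroup.lift g, by ext x; simp [hg]⟩

end FreeNorm

section Transfer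

theorem IsDehnFunctionOf.monotone {X : Type*} {R : Set (FreeGroup X)} {δ : ℕ → ℕ}
    (hδ : IsDehnFunctionOf R δ) : Monotone δ :=
  fun n m hnm => (hδ n).2 fun w hw hwn => (hδ m).1 w hw (hwn.trans hnm)

theorem Dominates.of_le_mul {f g : ℕ → ℕ} (hg : Monotone g) {A B C : ℕ}
    (h : ∀ n, f n ≤ A * g (B * n) + C * n) : Dominates f g := by
  refine ⟨A + B + C + 1, by omega, fun n => (h n).trans ?_⟩
  have hgn : g (B * n) ≤ g ((A + B + C + 1) * n) := hg (Nat.mul_le_mul_right n (by omega))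
  exact (Nat.add_le_add (Nat.mul_le_mul (by omega) hgn)
    (Nat.mul_le_mul_right n (by omega : C ≤ A + B + C + 1))).trans (Nat.le_add_right _ _)

theorem relative_dominates_absolute {X Y : Type*} [Finite Y] {R : Set (FreeGroup X)}
    (hR : R.Finite) {S : Set (FreeMetabelian Y)}
    (e : (FreeGroup X ⧸ Subgroup.normalClosure R) ≃* (FreeMetabelian Y ⧸ Subgroup.normalClosure S))
    {δ δt : ℕ → ℕ} (hδ : IsDehnFunctionOf R δ) (hδt : IsRelDehnFunctionOf S δt) :
    Dominates δt δ := by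
  let m := QuotientGroup.mk' (derivedSeries (FreeGroup Y) 2)
  let p := QuotientGroup.mk' (Subgroup.normalClosure R)
  let q := QuotientGroup.mk' (Subgroup.normalClosure S)
  obtain ⟨ψ, hψ⟩ := exists_comp_eq_of_surjective (QuotientGroup.mk'_surjective _ : Surjective p)
    ((e.symm.toMonoidHom.comp q).comp m)
  obtain ⟨φ, hφ⟩ := exists_comp_eq_of_surjective (QuotientGroup.mk'_surjective _ : Surjective q)
    (e.toMonoidHom.comp p)
  replace hψ (w) : p (ψ w) = e.symm (q (m w)) := DFunLike.congr_fun hψ w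
  replace hφ (w) : q (φ w) = e (p w) := DFunLike.congr_fun hφ w
  have hφR (r : R) : φ r ∈ Subgroup.normalClosure S := by
    rw [← QuotientGroup.eq_one_iff]
    exact (hφ r).trans ((map_eq_one_iff e e.injective).2
      ((QuotientGroup.eq_one_iff _).2 (Subgroup.subset_normalClosure r.2)))
  have hφψ (l) : (φ.comp ψ) (letter l) * (m (letter l))⁻¹ ∈ Subgroup.normalClosure S := by
    rw [← QuotientGroup.eq_one_iff]
    change q (φ (ψ (letter l)) * (m (letter l))⁻¹) = 1
    rw [map_mul, map_inv, hφ, hψ, e.apply_symm_apply, mul_inv_cancel]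
  have := hR.to_subtype
  obtain ⟨A, hA⟩ := AreaLe.exists_of_forall_mem_normalClosure hφR
  obtain ⟨B, hB⟩ := exists_freeNorm_map_le ψ
  obtain ⟨C, hC⟩ := exists_areaEq_of_letters (φ.comp ψ) m hφψ
  refine Dominates.of_le_mul hδ.monotone (A := A) (B := B) (C := C) fun n => (hδt n).2 ?_
  rintro _ hw ⟨v, rfl, hv⟩
  have hψv : ψ v ∈ Subgroup.normalClosure R := by
    rw [← QuotientGroup.eq_one_iff]
    refine (hψ v).trans ((map_eq_one_iff e.symm e.symm.injective).2 ?_)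
    exact (QuotientGroup.eq_one_iff _).2 hw
  have harea : AreaLe R (ψ v) (δ (B * n)) :=
    (hδ (B * n)).1 _ hψv ((hB v).trans (Nat.mul_le_mul_left B hv))
  refine ((hC v).symm.areaLe (harea.map φ fun r hr => hA ⟨r, hr⟩)).mono ?_
  rw [add_comm, mul_comm A, mul_comm C]
  exact Nat.add_le_add_left (Nat.mul_le_mul_right C hv) _

end Transfer

section Height

variable {X : Type*}

/-- The character of `FreeGroup X` with values `v` on the generators, written additively. -/
noncomputable def height (v : X → ℝ) (g : FreeGroup X) : ℝ :=
  (FreeGroup.lift (fun x => Multiplicative.ofAdd (v x)) g).toAdd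

theorem height_one (v : X → ℝ) : height v 1 = 0 := by simp [height]

theorem height_mul (v : X → ℝ) (g h : FreeGroup X) :
    height v (g * h) = height v g + height v h := by simp [height]

theorem height_inv (v : X → ℝ) (g : FreeGroup X) : height v g⁻¹ = -height v g := by
  simp [height]

theorem height_zpow (v : X → ℝ) (g : FreeGroup X) (k : ℤ) :
    height v (g ^ k) = k * height v g := by simp [height]

theorem height_pow (v : X → ℝ) (g : FreeGroup X) (k : ℕ) :
    height v (g ^ k) = k * height v g := by simp [height]

theorem height_of (v : X → ℝ) (x : X) : height v (FreeGroup.of x) = v x := by simp [height]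

theorem height_neg (v : X → ℝ) (g : FreeGroup X) : height (-v) g = -height v g := by
  induction g using FreeGroup.induction_on with
  | C1 => simp only [height_one, neg_zero]
  | of x => simp only [height_of, Pi.neg_apply]
  | inv_of x h => rw [height_inv, h, height_inv]
  | mul a b ha hb => rw [height_mul, ha, hb, height_mul]; ring

theorem height_eq_of_inv_mul {v : X → ℝ} {g h : FreeGroup X} (hgh : height v (g⁻¹ * h) = 0) :
    height v g = height v h := by
  rw [height_mul, height_inv] at hgh
  linarith

theorem height_eq_zero_of_mem_commutator (v : X → ℝ) {g : FreeGroup X}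
    (hg : g ∈ commutator (FreeGroup X)) : height v g = 0 := by
  have := Abelianization.commutator_subset_ker
    (FreeGroup.lift (fun x => Multiplicative.ofAdd (v x))) hg
  simpa [height] using this

theorem exists_height_letter_pos {v : X → ℝ} (hv : v ≠ 0) : ∃ z, 0 < height v (letter z) := by
  obtain ⟨x, hx⟩ := Function.ne_iff.1 hv
  rcases lt_or_gt_of_ne hx with h | h
  · exact ⟨(x, false), by rw [letter_false, height_inv, height_of]; exact neg_pos.2 h⟩
  · exact ⟨(x, true), by rw [letter_true, height_of]; exact h⟩

/-- The letter denoting the inverse generator. -/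
def letterInv (l : X × Bool) : X × Bool := (l.1, !l.2)

theorem letter_letterInv (l : X × Bool) : letter (letterInv l) = (letter l)⁻¹ := letter_not l.1 l.2

end Height

section Path

variable {X : Type*} {v : X → ℝ} {I J : Set ℝ} {g h : FreeGroup X}

/-- `g` is spelled by a word all of whose nonempty suffixes have height in `I`: a path from `1`
to `g` in the Cayley graph, growing by left multiplication, which stays in the slab `I`. -/
inductive HasPathIn (v : X → ℝ) (I : Set ℝ) : FreeGroup X → Prop
  | one : HasPathIn v I 1
  | step (l : X × Bool) (g : FreeGroup X) : HasPathIn v I g → height v (letter l * g) ∈ I →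
      HasPathIn v I (letter l * g)

namespace HasPathIn

theorem mono (hg : HasPathIn v I g) (hIJ : I ⊆ J) : HasPathIn v J g := by
  induction hg with
  | one => exact .one
  | step l g _ h ih => exact .step l g ih (hIJ h)

theorem height_mem (hg : HasPathIn v I g) (h0 : (0 : ℝ) ∈ I) : height v g ∈ I := by
  cases hg with
  | one => rwa [height_one]
  | step l g _ h => exact h

theorem mul (hg : HasPathIn v {t | t + height v h ∈ I} g) (hh : HasPathIn v I h) :
    HasPathIn v I (g * h) := by
  induction hg with
  | one => simpa
  | step l g _ hl ih =>
    rw [mul_assoc]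
    refine .step _ _ ih ?_
    rw [← mul_assoc, height_mul]
    exact hl

theorem mul_of_height_eq_zero (hg : HasPathIn v I g) (hh : HasPathIn v I h)
    (h0 : height v h = 0) : HasPathIn v I (g * h) :=
  (hg.mono fun t ht => by simpa [h0] using ht).mul hh

theorem inv_mul (hg : HasPathIn v I g) (h0 : (0 : ℝ) ∈ I) (hh : HasPathIn v I h)
    (hgh : height v h = height v g) : HasPathIn v I (g⁻¹ * h) := by
  induction hg generalizing h with
  | one => simpa
  | step l g hg _ ih =>
    have hv : height v (letter (letterInv l) * h) = height v g := by
      rw [letter_letterInv, height_mul, height_inv, hgh, height_mul, neg_add_cancel_left]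
    rw [mul_inv_rev, mul_assoc, ← letter_letterInv]
    exact ih (.step _ _ hh (hv ▸ hg.height_mem h0)) hv

theorem inv (hg : HasPathIn v I g) (h0 : (0 : ℝ) ∈ I) (hv : height v g = 0) :
    HasPathIn v I g⁻¹ := by
  simpa using hg.inv_mul h0 .one (by rw [height_one, hv])

theorem neg (hg : HasPathIn v I g) : HasPathIn (-v) {t | -t ∈ I} g := by
  induction hg with
  | one => exact .one
  | step l g _ h ih => exact .step _ _ ih (by simpa [height_neg] using h)

theorem letter_pow_mul [hI : I.OrdConnected] (hg : HasPathIn v I g) (hgI : height v g ∈ I)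
    {z : X × Bool} {k : ℕ} (hk : height v (letter z ^ k * g) ∈ I) :
    HasPathIn v I (letter z ^ k * g) := by
  induction k with
  | zero => simpa
  | succ k ih =>
    have hmem : height v (letter z ^ k * g) ∈ I := by
      refine hI.uIcc_subset hgI hk ?_
      simp only [height_mul, height_pow, Nat.cast_succ, add_mul, one_mul, Set.mem_uIcc]
      rcases le_total 0 (height v (letter z)) with h | h
      · have := mul_nonneg k.cast_nonneg h
        exact .inl ⟨by linarith, by linarith⟩
      · have := mul_nonpos_of_nonneg_of_nonpos k.cast_nonneg h
        exact .inr ⟨by linarith, by linarith⟩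
    rw [pow_succ', mul_assoc] at hk ⊢
    exact .step _ _ (ih hmem) hk

theorem letter_zpow_mul [I.OrdConnected] (hg : HasPathIn v I g) (hgI : height v g ∈ I)
    {z : X × Bool} {k : ℤ} (hk : height v (letter z ^ k * g) ∈ I) :
    HasPathIn v I (letter z ^ k * g) := by
  obtain ⟨n, rfl | rfl⟩ := k.eq_nat_or_neg
  · rw [zpow_natCast] at hk ⊢
    exact hg.letter_pow_mul hgI hk
  · rw [zpow_neg, zpow_natCast, ← inv_pow, ← letter_letterInv] at hk ⊢
    exact hg.letter_pow_mul hgI hk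

end HasPathIn

theorem exists_hasPathIn_Icc (v : X → ℝ) (g : FreeGroup X) :
    ∃ K, HasPathIn v (Set.Icc (-K) K) g := by
  induction g using letter_induction with
  | one => exact ⟨0, .one⟩
  | letter_mul l g ih =>
    obtain ⟨K, hK⟩ := ih
    refine ⟨max K |height v (letter l * g)|, .step _ _ (hK.mono ?_) (abs_le.1 (le_max_right _ _))⟩
    exact Set.Icc_subset_Icc (neg_le_neg (le_max_left _ _)) (le_max_left _ _)

theorem exists_hasPathIn_Icc_of_finite {R : Set (FreeGroup X)} (hR : R.Finite) (v : X → ℝ) :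
    ∃ K, ∀ r ∈ R, HasPathIn v (Set.Icc (-K) K) r := by
  choose K hK using exists_hasPathIn_Icc v
  obtain ⟨M, hM⟩ := (hR.image K).bddAbove
  have hKM (r) (hr : r ∈ R) : K r ≤ M := hM ⟨r, hr, rfl⟩
  exact ⟨M, fun r hr => (hK r).mono (Set.Icc_subset_Icc (neg_le_neg (hKM r hr)) (hKM r hr))⟩

theorem exists_zpow_mul_height_mem_Icc {z : X × Bool} (hz : 0 < height v (letter z))
    (g : FreeGroup X) :
    ∃ k : ℤ, height v (letter z ^ k * g) ∈ Set.Icc 0 (height v (letter z)) := by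
  obtain ⟨k, ⟨hk0, hk1⟩, -⟩ := existsUnique_add_zsmul_mem_Ico hz (height v g) 0
  refine ⟨k, ?_⟩
  rw [height_mul, height_zpow, add_comm, ← zsmul_eq_mul]
  exact ⟨hk0, by linarith⟩

variable {D : Subgroup (FreeGroup X)} [D.Normal]

theorem exists_zpow_mul_rep {z : X × Bool} (hD : commutator (FreeGroup X) ≤ D)
    (hz : 0 < height v (letter z)) {μ : ℝ} (hμ : ∀ l, |height v (letter l)| ≤ μ)
    (g : FreeGroup X) : ∃ (k : ℤ) (s : FreeGroup X),
      (s : FreeGroup X ⧸ D) = ((letter z ^ k * g : FreeGroup X) : FreeGroup X ⧸ D) ∧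
      HasPathIn v (Set.Icc (-μ) (height v (letter z) + μ)) s ∧
      height v s ∈ Set.Icc 0 (height v (letter z)) := by
  have hcomm (a b : FreeGroup X ⧸ D) : Commute a b :=
    (Subgroup.Normal.quotient_commutative_iff_commutator_le.2 hD).is_comm.comm a b
  induction g using letter_induction with
  | one => exact ⟨0, 1, by simp, .one, by rw [height_one]; exact ⟨le_rfl, hz.le⟩⟩
  | letter_mul l g ih =>
    obtain ⟨k, s, hs, hpath, hs0, hs1⟩ := ih
    have hl := abs_le.1 (hμ l)
    have hls : height v (letter l * s) ∈ Set.Icc (-μ) (height v (letter z) + μ) := by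
      rw [height_mul]; constructor <;> linarith
    obtain ⟨j, hj⟩ := exists_zpow_mul_height_mem_Icc hz (letter l * s)
    refine ⟨j + k, letter z ^ j * (letter l * s), ?_, ?_, hj⟩
    · simp only [QuotientGroup.mk_mul, hs, QuotientGroup.mk_zpow, zpow_add, mul_assoc]
      rw [(hcomm (letter l) _).left_comm]
    · have hμ0 : 0 ≤ μ := (abs_nonneg _).trans (hμ l)
      exact (hpath.step l s hls).letter_zpow_mul hls
        ⟨by linarith [hj.1, hμ0], by linarith [hj.2, hμ0]⟩

theorem exists_rep_hasPathIn {z : X × Bool} (hD : commutator (FreeGroup X) ≤ D)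
    (hz : 0 < height v (letter z)) {K : ℝ}
    (hK : ∀ l, height v (letter z) + |height v (letter l)| ≤ K) (q : FreeGroup X ⧸ D) :
    ∃ s : FreeGroup X, (s : FreeGroup X ⧸ D) = q ∧
      HasPathIn v (Set.Icc (min (-K) (height v s)) (max K (height v s))) s := by
  obtain ⟨g, rfl⟩ := QuotientGroup.mk_surjective q
  obtain ⟨k, s, hs, hpath, hs0, hs1⟩ :=
    exists_zpow_mul_rep hD hz (fun l => le_sub_iff_add_le'.2 (hK l)) g
  rw [add_sub_cancel, neg_sub] at hpath
  have hzK : height v (letter z) ≤ K := (le_add_of_nonneg_right (abs_nonneg _)).trans (hK z)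
  refine ⟨letter z ^ (-k) * s, by simp [hs], (hpath.mono ?_).letter_zpow_mul ?_ ?_⟩
  · exact Set.Icc_subset_Icc ((min_le_left _ _).trans (by linarith)) (le_max_left _ _)
  · exact ⟨(min_le_left _ _).trans (by linarith), le_trans (by linarith) (le_max_left _ _)⟩
  · exact ⟨min_le_right _ _, le_max_right _ _⟩

end Path

section TwistedRep

variable {X : Type*} {D : Subgroup (FreeGroup X)} [D.Normal] {M : Type*}

/-- The `D`-valued cocycle measuring the failure of a section `s` of `FreeGroup X → FreeGroup X ⧸ D`
to be equivariant. -/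
def sectionCocycle (s : FreeGroup X ⧸ D → FreeGroup X)
    (hs : ∀ q, (s q : FreeGroup X ⧸ D) = q) (g : FreeGroup X) (q : FreeGroup X ⧸ D) : D :=
  ⟨(s (g * q))⁻¹ * (g * s q), by rw [← QuotientGroup.eq, hs, QuotientGroup.mk_mul, hs]⟩

variable (s : FreeGroup X ⧸ D → FreeGroup X) (hs : ∀ q, (s q : FreeGroup X ⧸ D) = q)
  (σ : FreeGroup X ⧸ D → D →* Equiv.Perm M)

theorem sectionCocycle_mul (g h : FreeGroup X) (q : FreeGroup X ⧸ D) :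
    sectionCocycle s hs (g * h) q = sectionCocycle s hs g (h * q) * sectionCocycle s hs h q := by
  ext
  simp [sectionCocycle, mul_assoc]

theorem sectionCocycle_one (q : FreeGroup X ⧸ D) : sectionCocycle s hs 1 q = 1 := by
  ext
  simp [sectionCocycle]

theorem sectionCocycle_inv (g : FreeGroup X) (q : FreeGroup X ⧸ D) :
    (sectionCocycle s hs g ((g⁻¹ : FreeGroup X) * q))⁻¹ = sectionCocycle s hs g⁻¹ q := by
  rw [inv_eq_iff_mul_eq_one, ← sectionCocycle_mul, mul_inv_cancel, sectionCocycle_one]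

theorem sectionCocycle_mem_of_mem {N : Subgroup (FreeGroup X)} [N.Normal] (hND : N ≤ D)
    {g : FreeGroup X} (hg : g ∈ N) (q : FreeGroup X ⧸ D) :
    (sectionCocycle s hs g q : FreeGroup X) ∈ N := by
  change (s (g * q))⁻¹ * (g * s q) ∈ N
  rw [(QuotientGroup.eq_one_iff g).2 (hND hg), one_mul, ← mul_assoc]
  exact Subgroup.Normal.conj_mem' inferInstance g hg (s q)

/-- The permutation representation of `FreeGroup X` on `(FreeGroup X ⧸ D) × M` in which a generator
moves the fibre over `q` by the action `σ q` of its cocycle. When `σ` is constant this is induced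
from the `D`-action on `M`; letting `σ` depend on `q` glues several actions together. -/
def twistedRep : FreeGroup X →* Equiv.Perm ((FreeGroup X ⧸ D) × M) :=
  FreeGroup.lift fun x => Equiv.prodShear (Equiv.mulLeft (FreeGroup.of x : FreeGroup X ⧸ D))
    fun q => σ q (sectionCocycle s hs (FreeGroup.of x) q)

theorem twistedRep_letter (l : X × Bool) (q : FreeGroup X ⧸ D) (m : M) :
    ∃ p, (p = q ∨ p = letter l * q) ∧ twistedRep s hs σ (letter l) (q, m) =
      (letter l * q, σ p (sectionCocycle s hs (letter l) q) m) := by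
  obtain ⟨x, _ | _⟩ := l
  · refine ⟨_, .inr rfl, ?_⟩
    rw [letter_false, map_inv, Equiv.Perm.inv_eq_iff_eq]
    simp [twistedRep, ← sectionCocycle_inv]
  · exact ⟨q, .inl rfl, by simp [twistedRep, letter_true]⟩

/-- Across every edge of the Cayley graph of `FreeGroup X ⧸ D` whose ends have height in `J`, the
twists `σ` at both ends act on the cocycle of the edge as `ι` does. -/
def TwistEqOn (v : X → ℝ) (J : Set ℝ) (ι : D →* Equiv.Perm M) : Prop :=
  ∀ (l : X × Bool) (q : FreeGroup X ⧸ D), height v (s q) ∈ J → height v (s (letter l * q)) ∈ J →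
    ∀ p, p = q ∨ p = letter l * q →
      σ p (sectionCocycle s hs (letter l) q) = ι (sectionCocycle s hs (letter l) q)

variable {s hs σ} {v : X → ℝ} {J : Set ℝ} {ι : D →* Equiv.Perm M}

theorem height_section_mul (hs : ∀ q, (s q : FreeGroup X ⧸ D) = q)
    (hvD : ∀ g ∈ D, height v g = 0) (g : FreeGroup X) (q : FreeGroup X ⧸ D) :
    height v (s (g * q)) = height v (g * s q) :=
  height_eq_of_inv_mul (hvD _ (sectionCocycle s hs g q).2)

theorem TwistEqOn.twistedRep_apply (hJ : TwistEqOn s hs σ v J ι) (hvD : ∀ g ∈ D, height v g = 0)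
    {q : FreeGroup X ⧸ D} (hq : height v (s q) ∈ J) {g : FreeGroup X}
    (hg : HasPathIn v {t | t + height v (s q) ∈ J} g) (m : M) :
    twistedRep s hs σ g (q, m) = (g * q, ι (sectionCocycle s hs g q) m) := by
  have hmem {g : FreeGroup X} (h : height v g + height v (s q) ∈ J) :
      height v (s (g * q)) ∈ J := by
    rwa [height_section_mul hs hvD, height_mul]
  induction hg with
  | one => simp [sectionCocycle_one]
  | step l g hg hl ih =>
    obtain ⟨p, hp, hlp⟩ := twistedRep_letter s hs σ l (g * q) (ι (sectionCocycle s hs g q) m)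
    have hlg : height v (s (letter l * (g * q))) ∈ J := by
      rw [← mul_assoc, ← QuotientGroup.mk_mul]
      exact hmem hl
    have hg' := hmem (hg.height_mem (by simpa using hq))
    rw [map_mul, Equiv.Perm.mul_apply, ih, hlp, hJ l _ hg' hlg p hp, sectionCocycle_mul, map_mul,
      Equiv.Perm.mul_apply, QuotientGroup.mk_mul, mul_assoc]

/-- The element `g` lies in the image modulo `N` of the paths that stay in the slab `I`. -/
def HasRepIn (v : X → ℝ) (I : Set ℝ) (N : Subgroup (FreeGroup X)) (g : FreeGroup X) : Prop :=
  ∃ h, HasPathIn v I h ∧ h⁻¹ * g ∈ N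

theorem HasRepIn.of_mem {N : Subgroup (FreeGroup X)} {g : FreeGroup X} (hg : g ∈ N) :
    HasRepIn v J N g :=
  ⟨1, .one, by simpa⟩

variable {N : Subgroup (FreeGroup X)}

theorem TwistEqOn.twistedRep_eq_self [N.Normal] (hJ : TwistEqOn s hs σ v J ι)
    (hvD : ∀ g ∈ D, height v g = 0) (hND : N ≤ D) (hι : ∀ g : D, (g : FreeGroup X) ∈ N → ι g = 1)
    {q : FreeGroup X ⧸ D} (hq : height v (s q) ∈ J) {g : FreeGroup X} (hgN : g ∈ N)
    (hg : HasPathIn v {t | t + height v (s q) ∈ J} g) (m : M) :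
    twistedRep s hs σ g (q, m) = (q, m) := by
  rw [hJ.twistedRep_apply hvD hq hg, hι _ (sectionCocycle_mem_of_mem s hs hND hgN q),
    (QuotientGroup.eq_one_iff g).2 (hND hgN), one_mul, Equiv.Perm.one_apply]

theorem TwistEqOn.twistedRep_apply_one (hJ : TwistEqOn s hs σ v J ι)
    (hvD : ∀ g ∈ D, height v g = 0) (hND : N ≤ D) (hι : ∀ g : D, (g : FreeGroup X) ∈ N → ι g = 1)
    (hcomm : ⁅D, D⁆ ≤ N) (hN : N ≤ (twistedRep s hs σ).ker)
    (h0 : (0 : ℝ) ∈ J) (g : D) (hg : HasRepIn v J N g) (m : M) :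
    twistedRep s hs σ g (1, m) = (1, ι g m) := by
  obtain ⟨h, hpath, hhg⟩ := hg
  have hh : h ∈ D := by simpa using mul_mem g.2 (inv_mem (hND hhg))
  have hs1 : s 1 ∈ D := by rw [← QuotientGroup.eq_one_iff, hs]
  have hg_eq : twistedRep s hs σ h = twistedRep s hs σ g := ((MonoidHom.eq_iff _).2 (hN hhg)).symm
  have hιg : ι ⟨h, hh⟩ = ι g := by
    rw [← inv_mul_eq_one, ← map_inv, ← map_mul]
    exact hι _ hhg
  have hcocycle : ι (sectionCocycle s hs h 1) = ι ⟨h, hh⟩ := by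
    rw [← mul_inv_eq_one, ← map_inv, ← map_mul]
    refine hι _ ?_
    have := hcomm (Subgroup.commutator_mem_commutator (inv_mem hs1) hh)
    rw [commutatorElement_def, inv_inv] at this
    simpa [sectionCocycle, (QuotientGroup.eq_one_iff h).2 hh, mul_assoc] using this
  have hs0 := hvD _ hs1
  rw [← hg_eq, hJ.twistedRep_apply hvD (by rwa [hs0]) (by simpa [hs0] using hpath), hcocycle, hιg,
    (QuotientGroup.eq_one_iff h).2 hh, mul_one]

theorem TwistEqOn.of_band {I B : Set ℝ} {ι' : D →* Equiv.Perm M}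
    (hσ : ∀ q, σ q = ι ∨ σ q = ι' ∧ height v (s q) ∈ B)
    (hB : ∀ (l : X × Bool) q, height v (s q) ∈ J → height v (s (letter l * q)) ∈ J →
      height v (s q) ∈ B ∨ height v (s (letter l * q)) ∈ B →
      height v (s q) ∈ I ∧ height v (s (letter l * q)) ∈ I)
    (hI : ∀ (l : X × Bool) q, height v (s q) ∈ I → height v (s (letter l * q)) ∈ I →
      ι' (sectionCocycle s hs (letter l) q) = ι (sectionCocycle s hs (letter l) q)) :
    TwistEqOn s hs σ v J ι := by
  intro l q hq hlq p hp
  rcases hσ p with h | ⟨h, hpB⟩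
  · rw [h]
  · obtain ⟨hqI, hlqI⟩ := hB l q hq hlq (by rcases hp with rfl | rfl <;> tauto)
    rw [h, hI l q hqI hlqI]

end TwistedRep

section Halfspace

variable {X : Type*} {v : X → ℝ}

/-- The subgroup of `D` of the elements represented modulo `N` by a path in the slab `I`. -/
def repSubgroup (v : X → ℝ) (I : Set ℝ) (N D : Subgroup (FreeGroup X)) [N.Normal] (hND : N ≤ D)
    (hvD : ∀ g ∈ D, height v g = 0) (h0 : (0 : ℝ) ∈ I) : Subgroup D where
  carrier := {g | HasRepIn v I N g}
  one_mem' := .of_mem (one_mem N)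
  mul_mem' := by
    rintro a b ⟨h, hh, hha⟩ ⟨k, hk, hkb⟩
    have hk0 : height v k = 0 := (height_eq_of_inv_mul (hvD _ (hND hkb))).trans (hvD b b.2)
    refine ⟨h * k, hh.mul_of_height_eq_zero hk hk0, ?_⟩
    have hfactor : (h * k)⁻¹ * (a * b) = k⁻¹ * (h⁻¹ * a) * k * (k⁻¹ * b) := by group
    rw [Subgroup.coe_mul, hfactor]
    exact mul_mem (Subgroup.Normal.conj_mem' inferInstance _ hha _) hkb
  inv_mem' := by
    rintro a ⟨h, hh, hha⟩
    have hh0 : height v h = 0 := (height_eq_of_inv_mul (hvD _ (hND hha))).trans (hvD a a.2)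
    refine ⟨h⁻¹, hh.inv h0 hh0, ?_⟩
    have hfactor : h⁻¹⁻¹ * (a : FreeGroup X)⁻¹ = h * (h⁻¹ * a)⁻¹ * h⁻¹ := by group
    rw [Subgroup.coe_inv, hfactor]
    exact Subgroup.Normal.conj_mem inferInstance _ (inv_mem hha) _

theorem repSubgroup_normal {I : Set ℝ} {N D : Subgroup (FreeGroup X)} [N.Normal] (hND : N ≤ D)
    (hvD : ∀ g ∈ D, height v g = 0) (h0 : (0 : ℝ) ∈ I) (hcomm : ⁅D, D⁆ ≤ N) :
    (repSubgroup v I N D hND hvD h0).Normal where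
  conj_mem := by
    rintro a ⟨h, hh, hha⟩ d
    refine ⟨h, hh, ?_⟩
    have hfactor : h⁻¹ * (d * a * d⁻¹ : D) =
        h⁻¹ * a * ((a : FreeGroup X)⁻¹ * d * (a : FreeGroup X)⁻¹⁻¹ * (d : FreeGroup X)⁻¹) := by
      simp only [Subgroup.coe_mul, Subgroup.coe_inv]; group
    rw [hfactor, ← commutatorElement_def]
    exact mul_mem hha (hcomm (Subgroup.commutator_mem_commutator (inv_mem a.2) d.2))

theorem hasPathIn_sectionCocycle {D : Subgroup (FreeGroup X)} [D.Normal]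
    (hvD : ∀ g ∈ D, height v g = 0) {s : FreeGroup X ⧸ D → FreeGroup X}
    (hs : ∀ q, (s q : FreeGroup X ⧸ D) = q) {I : Set ℝ} (h0 : (0 : ℝ) ∈ I)
    (hsI : ∀ q, height v (s q) ∈ I → HasPathIn v I (s q)) (l : X × Bool) (q : FreeGroup X ⧸ D)
    (hq : height v (s q) ∈ I) (hlq : height v (s (letter l * q)) ∈ I) :
    HasPathIn v I (sectionCocycle s hs (letter l) q : FreeGroup X) := by
  have hls := height_section_mul hs hvD (letter l) q
  exact (hsI _ hlq).inv_mul h0 (.step l _ (hsI q hq) (hls ▸ hlq)) hls.symm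

/-- The twist of a section `s` by `ι` over the half-space of nonnegative height and by `κ` over its
complement. -/
noncomputable def halfspaceTwist {Q A : Type*} (v : X → ℝ) (s : Q → FreeGroup X) (ι κ : A) (q : Q) :
    A :=
  open Classical in if 0 ≤ height v (s q) then ι else κ

variable {D : Subgroup (FreeGroup X)} [D.Normal] {s : FreeGroup X ⧸ D → FreeGroup X}
  {hs : ∀ q, (s q : FreeGroup X ⧸ D) = q} {M : Type*} {ι κ : D →* Equiv.Perm M} {K : ℝ}

theorem twistEqOn_halfspaceTwist_Ici (hvD : ∀ g ∈ D, height v g = 0)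
    (hK : ∀ l, |height v (letter l)| ≤ K)
    (hband : ∀ (l : X × Bool) q, height v (s q) ∈ Set.Icc (-K) K →
      height v (s (letter l * q)) ∈ Set.Icc (-K) K →
      ι (sectionCocycle s hs (letter l) q) = κ (sectionCocycle s hs (letter l) q)) :
    TwistEqOn s hs (halfspaceTwist v s ι κ) v (Set.Ici (-K)) ι := by
  refine .of_band (B := Set.Iio 0) (ι' := κ) (fun q => ?_) (fun l q hq hlq hneg => ?_)
    fun l q h h' => (hband l q h h').symm
  · rcases le_or_gt 0 (height v (s q)) with h | h
    · exact .inl (if_pos h)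
    · exact .inr ⟨if_neg h.not_ge, h⟩
  · have hl := abs_le.1 (hK l)
    rw [height_section_mul hs hvD, height_mul] at hlq hneg ⊢
    simp only [Set.mem_Ici, Set.mem_Iio, Set.mem_Icc] at *
    rcases hneg with h | h <;> refine ⟨⟨?_, ?_⟩, ?_, ?_⟩ <;> linarith

theorem twistEqOn_halfspaceTwist_Iic (hvD : ∀ g ∈ D, height v g = 0)
    (hK : ∀ l, |height v (letter l)| ≤ K)
    (hband : ∀ (l : X × Bool) q, height v (s q) ∈ Set.Icc (-K) K →
      height v (s (letter l * q)) ∈ Set.Icc (-K) K →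
      ι (sectionCocycle s hs (letter l) q) = κ (sectionCocycle s hs (letter l) q)) :
    TwistEqOn s hs (halfspaceTwist v s ι κ) v (Set.Iic K) κ := by
  refine .of_band (B := Set.Ici 0) (ι' := ι) (fun q => ?_) (fun l q hq hlq hpos => ?_) hband
  · rcases le_or_gt 0 (height v (s q)) with h | h
    · exact .inr ⟨if_pos h, h⟩
    · exact .inl (if_neg h.not_ge)
  · have hl := abs_le.1 (hK l)
    rw [height_section_mul hs hvD, height_mul] at hlq hpos ⊢
    simp only [Set.mem_Ici, Set.mem_Iic, Set.mem_Icc] at *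
    rcases hpos with h | h <;> refine ⟨⟨?_, ?_⟩, ?_, ?_⟩ <;> linarith

variable {R : Set (FreeGroup X)}

theorem normalClosure_le_ker_twistedRep (hRD : Subgroup.normalClosure R ≤ D)
    (hvD : ∀ g ∈ D, height v g = 0) {σ : FreeGroup X ⧸ D → D →* Equiv.Perm M} (hK : 0 ≤ K)
    (hRK : ∀ r ∈ R, HasPathIn v (Set.Icc (-K) K) r)
    (hι_on : TwistEqOn s hs σ v (Set.Ici (-K)) ι) (hκ_on : TwistEqOn s hs σ v (Set.Iic K) κ)
    (hι : ∀ g : D, (g : FreeGroup X) ∈ Subgroup.normalClosure R → ι g = 1)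
    (hκ : ∀ g : D, (g : FreeGroup X) ∈ Subgroup.normalClosure R → κ g = 1) :
    Subgroup.normalClosure R ≤ (twistedRep s hs σ).ker := by
  refine Subgroup.normalClosure_le_normal fun r hr => Equiv.ext fun ⟨q, m⟩ => ?_
  have hrN := Subgroup.subset_normalClosure hr
  rcases le_total 0 (height v (s q)) with h | h
  · refine hι_on.twistedRep_eq_self hvD hRD hι ((neg_nonpos.2 hK).trans h) hrN ?_ m
    exact (hRK r hr).mono fun t ht => le_add_of_le_of_nonneg ht.1 h
  · refine hκ_on.twistedRep_eq_self hvD hRD hκ (h.trans hK) hrN ?_ m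
    exact (hRK r hr).mono fun t ht => add_le_of_le_of_nonpos ht.2 h

theorem exists_rep_of_halfspaces (hRD : Subgroup.normalClosure R ≤ D)
    (hD : commutator (FreeGroup X) ≤ D) (hcomm : ⁅D, D⁆ ≤ Subgroup.normalClosure R)
    (hvD : ∀ g ∈ D, height v g = 0) {z : X × Bool} (hz : 0 < height v (letter z))
    (hK : ∀ l, height v (letter z) + |height v (letter l)| ≤ K)
    (hRK : ∀ r ∈ R, HasPathIn v (Set.Icc (-K) K) r)
    (hι : ∀ g : D, HasRepIn v (Set.Iic K) (Subgroup.normalClosure R) g → ι g = 1)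
    (hκ : ∀ g : D, HasRepIn v (Set.Ici (-K)) (Subgroup.normalClosure R) g → κ g = 1) :
    ∃ Θ : FreeGroup X →* Equiv.Perm ((FreeGroup X ⧸ D) × M),
      Subgroup.normalClosure R ≤ Θ.ker ∧
      (∀ g : D, HasRepIn v (Set.Ici (-K)) (Subgroup.normalClosure R) g →
        ∀ m, Θ g (1, m) = (1, ι g m)) ∧
      (∀ g : D, HasRepIn v (Set.Iic K) (Subgroup.normalClosure R) g →
        ∀ m, Θ g (1, m) = (1, κ g m)) := by
  have hlK (l) : |height v (letter l)| ≤ K := (le_add_of_nonneg_left hz.le).trans (hK l)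
  have hK0 : 0 ≤ K := (abs_nonneg _).trans (hlK z)
  choose s hs hpath using exists_rep_hasPathIn hD hz hK
  have hband (l : X × Bool) (q) (hq : height v (s q) ∈ Set.Icc (-K) K)
      (hlq : height v (s (letter l * q)) ∈ Set.Icc (-K) K) :
      ι (sectionCocycle s hs (letter l) q) = κ (sectionCocycle s hs (letter l) q) := by
    have hp := hasPathIn_sectionCocycle (I := Set.Icc (-K) K) hvD hs
      ⟨neg_nonpos.2 hK0, hK0⟩ (fun q hq =>
        (hpath q).mono (Set.Icc_subset_Icc (le_min le_rfl hq.1) (max_le le_rfl hq.2)))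
      l q hq hlq
    rw [hι _ ⟨_, hp.mono Set.Icc_subset_Iic_self, by simp⟩,
      hκ _ ⟨_, hp.mono Set.Icc_subset_Ici_self, by simp⟩]
  have hι_on := twistEqOn_halfspaceTwist_Ici (hs := hs) hvD hlK hband
  have hκ_on := twistEqOn_halfspaceTwist_Iic (hs := hs) hvD hlK hband
  have hιN (g : D) (hg : (g : FreeGroup X) ∈ Subgroup.normalClosure R) := hι g (.of_mem hg)
  have hκN (g : D) (hg : (g : FreeGroup X) ∈ Subgroup.normalClosure R) := hκ g (.of_mem hg)
  have hker := normalClosure_le_ker_twistedRep hRD hvD hK0 hRK hι_on hκ_on hιN hκN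
  exact ⟨_, hker, hι_on.twistedRep_apply_one hvD hRD hιN hcomm hker (neg_nonpos.2 hK0),
    hκ_on.twistedRep_apply_one hvD hRD hκN hcomm hker hK0⟩

section FibreShift

variable (P Q : Type*) [Group P] [Group Q]

open Classical in
/-- The action of `P` on `Q × P` by translations of the fibre over `1 : Q`. -/
noncomputable def fibreShift : P →* Equiv.Perm (Q × P) where
  toFun p := Equiv.Perm.prodExtendRight 1 (Equiv.mulLeft p)
  map_one' := by
    ext ⟨q, p⟩ : 1
    by_cases h : q = 1 <;> simp [h, Equiv.Perm.prodExtendRight]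
  map_mul' p p' := by
    ext ⟨q, x⟩ : 1
    by_cases h : q = 1 <;> simp [h, Equiv.Perm.prodExtendRight]

/-- The action of `Q` on `Q × P` by translations of the base. -/
def baseShift : Q →* Equiv.Perm (Q × P) where
  toFun q := (Equiv.mulLeft q).prodCongr (Equiv.refl P)
  map_one' := by ext ⟨q, p⟩ <;> simp
  map_mul' q q' := by ext ⟨x, p⟩ <;> simp [mul_assoc]

variable {P Q}

theorem eq_one_or_eq_one_of_shifts_comm {p : P} {q : Q}
    (h : fibreShift P Q p (baseShift P Q q (1, 1)) = baseShift P Q q (fibreShift P Q p (1, 1))) :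
    p = 1 ∨ q = 1 := by
  by_contra! hpq
  simp [fibreShift, baseShift, Equiv.Perm.prodExtendRight, hpq.1.symm, hpq.2] at h

end FibreShift

/-- Otherwise the actions on `D ⧸ A₋` and `D ⧸ A₊`, where `A₋` and `A₊` are the subgroups of the
elements supported on either half-space, glue to a representation of `FreeGroup X` that kills `R`,
but in which two elements of the metabelian kernel `D` fail to commute. -/
theorem halfspace_dichotomy (hRD : Subgroup.normalClosure R ≤ D)
    (hD : commutator (FreeGroup X) ≤ D) (hcomm : ⁅D, D⁆ ≤ Subgroup.normalClosure R)
    (hvD : ∀ g ∈ D, height v g = 0) {z : X × Bool} (hz : 0 < height v (letter z))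
    (hK : ∀ l, height v (letter z) + |height v (letter l)| ≤ K)
    (hRK : ∀ r ∈ R, HasPathIn v (Set.Icc (-K) K) r) :
    (∀ g ∈ D, HasRepIn v (Set.Ici (-K)) (Subgroup.normalClosure R) g →
      HasRepIn v (Set.Iic K) (Subgroup.normalClosure R) g) ∨
    (∀ g ∈ D, HasRepIn v (Set.Iic K) (Subgroup.normalClosure R) g →
      HasRepIn v (Set.Ici (-K)) (Subgroup.normalClosure R) g) := by
  have hK0 : 0 ≤ K := (add_nonneg hz.le (abs_nonneg _)).trans (hK z)
  let A := repSubgroup v (Set.Iic K) _ D hRD hvD hK0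
  let B := repSubgroup v (Set.Ici (-K)) _ D hRD hvD (neg_nonpos.2 hK0)
  have : A.Normal := repSubgroup_normal hRD hvD hK0 hcomm
  have : B.Normal := repSubgroup_normal hRD hvD (neg_nonpos.2 hK0) hcomm
  obtain ⟨Θ, hΘ, hΘA, hΘB⟩ := exists_rep_of_halfspaces hRD hD hcomm hvD hz hK hRK
    (ι := (fibreShift (D ⧸ A) (D ⧸ B)).comp (QuotientGroup.mk' A))
    (κ := (baseShift (D ⧸ A) (D ⧸ B)).comp (QuotientGroup.mk' B))
    (fun g hg => by
      rw [MonoidHom.comp_apply, QuotientGroup.mk'_apply,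
        (QuotientGroup.eq_one_iff g).2 hg, map_one])
    (fun g hg => by
      rw [MonoidHom.comp_apply, QuotientGroup.mk'_apply,
        (QuotientGroup.eq_one_iff g).2 hg, map_one])
  by_contra! ⟨⟨a, haD, haB, haA⟩, ⟨b, hbD, hbA, hbB⟩⟩
  have hab : Θ (a * b) = Θ (b * a) := by
    rw [MonoidHom.eq_iff]
    have := hcomm (Subgroup.commutator_mem_commutator (inv_mem haD) (inv_mem hbD))
    rw [commutatorElement_def, inv_inv, inv_inv] at this
    exact hΘ (by simpa [mul_assoc] using this)
  have hfix := congrArg (fun e => e (1, (1, 1))) hab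
  simp only [map_mul, Equiv.Perm.mul_apply, hΘA ⟨a, haD⟩ haB, hΘB ⟨b, hbD⟩ hbA,
    Prod.mk.injEq] at hfix
  rcases eq_one_or_eq_one_of_shifts_comm hfix.2 with h | h
  · exact haA ((QuotientGroup.eq_one_iff _).1 h)
  · exact hbB ((QuotientGroup.eq_one_iff _).1 h)

end Halfspace

section LetterComm

open scoped commutatorElement

variable {X : Type*}

/-- The commutator of the two letters of `e`. -/
def letterComm (e : (X × Bool) × (X × Bool)) : FreeGroup X := ⁅letter e.1, letter e.2⁆

theorem letterComm_mem_commutator (e : (X × Bool) × (X × Bool)) :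
    letterComm e ∈ commutator (FreeGroup X) :=
  Subgroup.commutator_mem_commutator (Subgroup.mem_top _) (Subgroup.mem_top _)

theorem commute_map_of_commute_letter {G : Type*} [Group G] (f : FreeGroup X →* G)
    (hf : ∀ l m, Commute (f (letter l)) (f (letter m))) (g h : FreeGroup X) :
    Commute (f g) (f h) := by
  have hletter (l : X × Bool) : Commute (f (letter l)) (f h) := by
    induction h using letter_induction with
    | one => rw [map_one]; exact Commute.one_right _
    | letter_mul m h ih => rw [map_mul]; exact (hf l m).mul_right ih
  induction g using letter_induction with
  | one => rw [map_one]; exact Commute.one_left _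
  | letter_mul l g ih => rw [map_mul]; exact (hletter l).mul_left ih

theorem commutator_le_normalClosure_letterComm :
    commutator (FreeGroup X) ≤ Subgroup.normalClosure (Set.range letterComm) := by
  rw [← Subgroup.Normal.quotient_commutative_iff_commutator_le]
  refine ⟨⟨fun a b => ?_⟩⟩
  obtain ⟨a, rfl⟩ := QuotientGroup.mk'_surjective _ a
  obtain ⟨b, rfl⟩ := QuotientGroup.mk'_surjective _ b
  refine commute_map_of_commute_letter _ (fun l m => ?_) a b
  rw [← commutatorElement_eq_one_iff_commute, ← map_commutatorElement]
  exact (QuotientGroup.eq_one_iff _).2 (Subgroup.subset_normalClosure ⟨(l, m), rfl⟩)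

end LetterComm

section Tame

open scoped commutatorElement

variable {X : Type*} {v : X → ℝ}

/-- The subgroup generated by the conjugates `u⁻¹ * letterComm e * u` with `u` of height at most
`t`. -/
def lowCommutators (v : X → ℝ) (t : ℝ) : Subgroup (FreeGroup X) :=
  Subgroup.closure {g | ∃ e u, height v u ≤ t ∧ u⁻¹ * letterComm e * u = g}

theorem conj_letterComm_mem_lowCommutators {t : ℝ} (e) {u : FreeGroup X} (hu : height v u ≤ t) :
    u⁻¹ * letterComm e * u ∈ lowCommutators v t :=
  Subgroup.subset_closure ⟨e, u, hu, rfl⟩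

theorem lowCommutators_mono : Monotone (lowCommutators v) := fun _ _ hst =>
  Subgroup.closure_mono fun _ ⟨e, u, hu, hg⟩ => ⟨e, u, hu.trans hst, hg⟩

theorem conj_mem_lowCommutators {t t' : ℝ} {g h : FreeGroup X} (hh : h ∈ lowCommutators v t)
    (ht : t ≤ t' + height v g) : g * h * g⁻¹ ∈ lowCommutators v t' := by
  have hle : lowCommutators v t ≤ (lowCommutators v t').comap (MulAut.conj g).toMonoidHom := by
    rw [lowCommutators, Subgroup.closure_le]
    rintro _ ⟨e, u, hu, rfl⟩
    have := conj_letterComm_mem_lowCommutators (v := v) (t := t') e (u := u * g⁻¹)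
      (by rw [height_mul, height_inv]; linarith)
    simpa [mul_assoc] using this
  exact hle hh

theorem exists_mem_lowCommutators {g : FreeGroup X} (hg : g ∈ commutator (FreeGroup X)) :
    ∃ t, g ∈ lowCommutators v t := by
  replace hg := commutator_le_normalClosure_letterComm hg
  induction hg using Subgroup.closure_induction with
  | mem g hg =>
    obtain ⟨_, ⟨e, rfl⟩, heg⟩ := Group.mem_conjugatesOfSet_iff.1 hg
    obtain ⟨c, rfl⟩ := isConj_iff.1 heg
    exact ⟨_, by simpa using conj_letterComm_mem_lowCommutators e (u := c⁻¹) le_rfl⟩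
  | one => exact ⟨0, one_mem _⟩
  | mul a b _ _ iha ihb =>
    obtain ⟨s, hs⟩ := iha
    obtain ⟨t, ht⟩ := ihb
    exact ⟨max s t, mul_mem (lowCommutators_mono (le_max_left s t) hs)
      (lowCommutators_mono (le_max_right s t) ht)⟩
  | inv a _ ih => exact ih.imp fun _ h => inv_mem h

theorem conj_commutator_letter_pow_mem_lowCommutators {t : ℝ} {z : X × Bool}
    (hz : 0 ≤ height v (letter z)) (l : X × Bool) (M : ℕ) {g : FreeGroup X} (hg : height v g ≤ t) :
    g⁻¹ * ⁅letter l, letter z ^ M⁆ * g ∈ lowCommutators v t := by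
  induction M generalizing g with
  | zero => simp
  | succ M ih =>
    have hzg := ih (g := (letter z)⁻¹ * g) (by rw [height_mul, height_inv]; linarith)
    convert mul_mem (conj_letterComm_mem_lowCommutators (l, z) hg) hzg using 1
    simp only [letterComm, commutatorElement_def, pow_succ']
    group

theorem commutator_letter_pow_mem_lowCommutators {t : ℝ} (ht : 0 ≤ t) {z : X × Bool}
    (hz : 0 ≤ height v (letter z)) {g : FreeGroup X} (hg : HasPathIn v (Set.Iic t) g) (M : ℕ) :
    ⁅g⁻¹, letter z ^ M⁆ ∈ lowCommutators v t := by
  induction hg with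
  | one => simp
  | step l g hg _ ih =>
    have hl := conj_commutator_letter_pow_mem_lowCommutators hz (letterInv l) M (hg.height_mem ht)
    convert mul_mem hl ih using 1
    rw [letter_letterInv]
    simp only [commutatorElement_def]
    group

theorem HasPathIn.mem_lowCommutators {t : ℝ} (ht : 0 ≤ t) {z : X × Bool}
    (hz : 0 < height v (letter z)) {g : FreeGroup X} (hpath : HasPathIn v (Set.Iic t) g)
    (hg : g ∈ commutator (FreeGroup X)) : g ∈ lowCommutators v t := by
  obtain ⟨s, hs⟩ := exists_mem_lowCommutators (v := v) hg
  obtain ⟨M, hM⟩ := exists_nat_ge ((s - t) / height v (letter z))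
  rw [div_le_iff₀ hz] at hM
  have hconj : letter z ^ M * g * (letter z ^ M)⁻¹ ∈ lowCommutators v t :=
    conj_mem_lowCommutators hs (by rw [height_pow]; linarith)
  have hcomm := commutator_letter_pow_mem_lowCommutators ht hz.le hpath M
  convert mul_mem hconj (inv_mem hcomm) using 1
  rw [commutatorElement_def]
  group

theorem exists_mul_of_mem_normalClosure {G : Type*} [Group G] {R : Set G} {n : G}
    (hn : n ∈ Subgroup.normalClosure R) :
    ∃ ρ ∈ Subgroup.closure R, ∃ f ∈ commutator G, ρ * f = n := by
  have hN : (Subgroup.closure R ⊔ commutator G).Normal := by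
    refine ⟨fun n hn g => ?_⟩
    rw [← inv_mul_cancel_right (g * n * g⁻¹) n]
    refine mul_mem (Subgroup.mem_sup_right ?_) hn
    exact Subgroup.commutator_mem_commutator (Subgroup.mem_top g) (Subgroup.mem_top n)
  have hle : Subgroup.normalClosure R ≤ Subgroup.closure R ⊔ commutator G :=
    Subgroup.normalClosure_le_normal
      fun r hr => Subgroup.mem_sup_left (Subgroup.subset_closure hr)
  exact Subgroup.mem_sup_of_normal_right.1 (hle hn)

variable {R : Set (FreeGroup X)}

theorem HasPathIn.of_mem_closure {I : Set ℝ} (h0 : (0 : ℝ) ∈ I)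
    (hvR : ∀ r ∈ R, height v r = 0) (hR : ∀ r ∈ R, HasPathIn v I r) {ρ : FreeGroup X}
    (hρ : ρ ∈ Subgroup.closure R) : height v ρ = 0 ∧ HasPathIn v I ρ := by
  induction hρ using Subgroup.closure_induction with
  | mem r hr => exact ⟨hvR r hr, hR r hr⟩
  | one => exact ⟨height_one v, .one⟩
  | mul a b _ _ ha hb =>
    exact ⟨by rw [height_mul, ha.1, hb.1, add_zero], ha.2.mul_of_height_eq_zero hb.2 hb.1⟩
  | inv a _ ha => exact ⟨by rw [height_inv, ha.1, neg_zero], ha.2.inv h0 ha.1⟩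

theorem HasRepIn.exists_mem_lowCommutators {t : ℝ} (ht : 0 ≤ t)
    (hvN : ∀ n ∈ Subgroup.normalClosure R, height v n = 0)
    (hR : ∀ r ∈ R, HasPathIn v (Set.Iic t) r) {z : X × Bool} (hz : 0 < height v (letter z))
    {g : FreeGroup X} (hg : g ∈ commutator (FreeGroup X))
    (hrep : HasRepIn v (Set.Iic t) (Subgroup.normalClosure R) g) :
    ∃ h ∈ lowCommutators v t, h⁻¹ * g ∈ Subgroup.normalClosure R := by
  obtain ⟨k, hk, hkg⟩ := hrep
  obtain ⟨ρ, hρ, f, hf, hρf⟩ := exists_mul_of_mem_normalClosure (inv_mem hkg)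
  have hρN := Subgroup.closure_le_normalClosure hρ
  have hρ' := HasPathIn.of_mem_closure ht
    (fun r hr => hvN r (Subgroup.subset_normalClosure hr)) hR hρ
  have hk0 : height v k = 0 :=
    (height_eq_of_inv_mul (hvN _ hkg)).trans (height_eq_zero_of_mem_commutator v hg)
  have hcomm : ρ⁻¹ * k ∈ commutator (FreeGroup X) := by
    have hfactor : ρ⁻¹ * k = ρ⁻¹ * g * ρ * f := by
      rw [mul_assoc _ ρ f, hρf]; group
    rw [hfactor]
    exact mul_mem (Subgroup.Normal.conj_mem' inferInstance g hg ρ) hf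
  have hpath : HasPathIn v (Set.Iic t) (ρ⁻¹ * k) :=
    (hρ'.2.inv ht hρ'.1).mul_of_height_eq_zero hk hk0
  refine ⟨ρ⁻¹ * k, hpath.mem_lowCommutators ht hz hcomm, ?_⟩
  have hfactor : (ρ⁻¹ * k)⁻¹ * g = k⁻¹ * ρ * k * (k⁻¹ * g) := by group
  rw [hfactor]
  exact mul_mem (Subgroup.Normal.conj_mem' inferInstance ρ hρN k) hkg

/-- The Bieri–Strebel condition for the character `v`: modulo `R`, every commutator of letters is a
product of conjugates `u⁻¹ * letterComm e * u` with `u` of negative height. -/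
def Tame (R : Set (FreeGroup X)) (v : X → ℝ) : Prop :=
  ∀ e, ∃ h ∈ lowCommutators v (-1), h⁻¹ * letterComm e ∈ Subgroup.normalClosure R

theorem exists_conj_pow_hasPathIn_Ici {z : X × Bool} (hz : 0 < height v (letter z))
    {g : FreeGroup X} (hg : height v g = 0) (t : ℝ) :
    ∃ j : ℕ, t ≤ height v (letter z ^ j) ∧
      HasPathIn v (Set.Ici 0) ((letter z ^ j)⁻¹ * (g * letter z ^ j)) := by
  obtain ⟨K, hK⟩ := exists_hasPathIn_Icc v g
  obtain ⟨j, hj⟩ := exists_nat_ge (max t K / height v (letter z))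
  rw [div_le_iff₀ hz, ← height_pow] at hj
  have hj0 : 0 ≤ height v (letter z ^ j) := by
    rw [height_pow]; exact mul_nonneg j.cast_nonneg hz.le
  have hpow : HasPathIn v (Set.Ici 0) (letter z ^ j) := by
    simpa using HasPathIn.one.letter_pow_mul (by simp [height_one]) (by simpa using hj0)
  refine ⟨j, (le_max_left t K).trans hj, hpow.inv_mul Set.self_mem_Ici (.mul (hK.mono ?_) hpow) ?_⟩
  · intro s hs
    have := (le_max_right t K).trans hj
    change 0 ≤ s + height v (letter z ^ j)
    linarith [hs.1]
  · rw [height_mul, hg, zero_add]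

/-- Conjugating `letterComm e` far up the half-space of positive height and replacing the result by
a representative of bounded height gains the required drop. -/
theorem Tame.of_halfspace {K : ℝ} (hK : 0 ≤ K)
    (hvN : ∀ n ∈ Subgroup.normalClosure R, height v n = 0) {z : X × Bool}
    (hz : 0 < height v (letter z)) (hR : ∀ r ∈ R, HasPathIn v (Set.Iic K) r)
    (h : ∀ g ∈ commutator (FreeGroup X), HasRepIn v (Set.Ici (-K)) (Subgroup.normalClosure R) g →
      HasRepIn v (Set.Iic K) (Subgroup.normalClosure R) g) : Tame R v := by
  intro e
  have he := letterComm_mem_commutator e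
  obtain ⟨j, hj, hpath⟩ :=
    exists_conj_pow_hasPathIn_Ici hz (height_eq_zero_of_mem_commutator v he) (K + 1)
  set u := letter z ^ j
  have hconj : u⁻¹ * (letterComm e * u) ∈ commutator (FreeGroup X) := by
    rw [← mul_assoc]; exact Subgroup.Normal.conj_mem' inferInstance _ he u
  obtain ⟨k, hk, hkN⟩ := HasRepIn.exists_mem_lowCommutators hK hvN hR hz hconj
    (h _ hconj ⟨_, hpath.mono (Set.Ici_subset_Ici.2 (neg_nonpos.2 hK)), by simp⟩)
  refine ⟨u * k * u⁻¹, conj_mem_lowCommutators hk (by linarith), ?_⟩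
  have hfactor : (u * k * u⁻¹)⁻¹ * letterComm e =
      u * (k⁻¹ * (u⁻¹ * (letterComm e * u))) * u⁻¹ := by group
  rw [hfactor]
  exact Subgroup.Normal.conj_mem inferInstance _ hkN u

theorem Tame.of_height_ne_zero {n : FreeGroup X} (hn : n ∈ Subgroup.normalClosure R)
    (hvn : height v n ≠ 0) : Tame R v := by
  intro e
  obtain ⟨m, hmN, hm⟩ : ∃ m ∈ Subgroup.normalClosure R, height v m < 0 := by
    rcases lt_or_gt_of_ne hvn with h | h
    · exact ⟨n, hn, h⟩
    · exact ⟨n⁻¹, inv_mem hn, by rw [height_inv]; exact neg_neg_of_pos h⟩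
  obtain ⟨k, hk⟩ := exists_nat_ge (1 / -height v m)
  rw [div_le_iff₀ (neg_pos.2 hm)] at hk
  replace hm : height v (m ^ k) ≤ -1 := by rw [height_pow]; linarith
  replace hmN := pow_mem hmN k
  set m := m ^ k
  refine ⟨_, conj_letterComm_mem_lowCommutators e hm, ?_⟩
  have hfactor : (m⁻¹ * letterComm e * m)⁻¹ * letterComm e =
      m⁻¹ * ((letterComm e)⁻¹ * m * letterComm e) := by group
  rw [hfactor]
  exact mul_mem (inv_mem hmN) (Subgroup.Normal.conj_mem' inferInstance m hmN _)

theorem HasRepIn.neg {I : Set ℝ} {N : Subgroup (FreeGroup X)} {g : FreeGroup X}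
    (hg : HasRepIn v I N g) : HasRepIn (-v) {t | -t ∈ I} N g :=
  let ⟨h, hh, hhg⟩ := hg
  ⟨h, hh.neg, hhg⟩

theorem IsMetabelian.commutator_sup_le {G : Type*} [Group G] {N : Subgroup G} [N.Normal]
    (h : IsMetabelian (G ⧸ N)) : ⁅commutator G ⊔ N, commutator G ⊔ N⁆ ≤ N := by
  have hmap {g : G} (hg : g ∈ commutator G ⊔ N) : QuotientGroup.mk' N g ∈ commutator (G ⧸ N) := by
    have hle : commutator G ⊔ N ≤ (commutator (G ⧸ N)).comap (QuotientGroup.mk' N) := by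
      refine sup_le ?_ fun n hn => ?_
      · rw [← Subgroup.map_le_iff_le_comap, commutator_def, commutator_def,
          Subgroup.map_commutator]
        exact Subgroup.commutator_mono le_top le_top
      · rw [Subgroup.mem_comap, QuotientGroup.mk'_apply, (QuotientGroup.eq_one_iff n).2 hn]
        exact one_mem _
    exact hle hg
  rw [Subgroup.commutator_le]
  intro a ha b hb
  rw [← QuotientGroup.eq_one_iff, ← QuotientGroup.mk'_apply, map_commutatorElement,
    commutatorElement_eq_one_iff_mul_comm]
  exact h _ _ (hmap ha) (hmap hb)

theorem tame_or_tame_neg [Finite X] (hR : R.Finite)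
    (hmeta : IsMetabelian (FreeGroup X ⧸ Subgroup.normalClosure R)) (hv : v ≠ 0) :
    Tame R v ∨ Tame R (-v) := by
  by_cases! hvN : ∃ n ∈ Subgroup.normalClosure R, height v n ≠ 0
  · obtain ⟨n, hn, hvn⟩ := hvN
    exact .inl (.of_height_ne_zero hn hvn)
  obtain ⟨z, hz⟩ := exists_height_letter_pos hv
  obtain ⟨K₁, hK₁⟩ := exists_hasPathIn_Icc_of_finite hR v
  obtain ⟨K₂, hK₂⟩ :=
    (Set.finite_range fun l => height v (letter z) + |height v (letter l)|).bddAbove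
  let K := max K₁ K₂
  have hK (l) : height v (letter z) + |height v (letter l)| ≤ K :=
    (hK₂ ⟨l, rfl⟩).trans (le_max_right _ _)
  have hK0 : 0 ≤ K := (add_nonneg hz.le (abs_nonneg _)).trans (hK z)
  have hRK (r) (hr : r ∈ R) : HasPathIn v (Set.Icc (-K) K) r :=
    (hK₁ r hr).mono (Set.Icc_subset_Icc (neg_le_neg (le_max_left _ _)) (le_max_left _ _))
  have hvD : ∀ g ∈ commutator (FreeGroup X) ⊔ Subgroup.normalClosure R, height v g = 0 := by
    intro g hg
    obtain ⟨a, ha, n, hn, rfl⟩ := Subgroup.mem_sup_of_normal_right.1 hg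
    rw [height_mul, height_eq_zero_of_mem_commutator v ha, hvN n hn, add_zero]
  rcases halfspace_dichotomy le_sup_right le_sup_left hmeta.commutator_sup_le hvD hz hK hRK
    with h | h
  · exact .inl (.of_halfspace hK0 hvN hz (fun r hr => (hRK r hr).mono Set.Icc_subset_Iic_self)
      fun g hg => h g (Subgroup.mem_sup_left hg))
  · refine .inr (.of_halfspace (z := letterInv z) hK0 (fun n hn => ?_) ?_ (fun r hr => ?_) ?_)
    · rw [height_neg, hvN n hn, neg_zero]
    · rwa [letter_letterInv, height_neg, height_inv, neg_neg]
    · exact (hRK r hr).neg.mono fun t ht => neg_le_neg_iff.1 ht.1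
    · intro g hg hrep
      have hrep' := hrep.neg
      rw [neg_neg] at hrep'
      obtain ⟨k, hk, hkg⟩ := (h g (Subgroup.mem_sup_left hg) (hrep'.imp fun k hk =>
        ⟨hk.1.mono fun t ht => Set.mem_Iic.2 (neg_le_neg_iff.1 ht), hk.2⟩)).neg
      exact ⟨k, hk.mono fun t ht => Set.mem_Iic.2 (neg_le_neg_iff.1 ht), hkg⟩

end Tame

section ExpVec

variable {X : Type*}

open Classical in
/-- The vector of exponent sums of a word: the image of `g` in the abelianization `X → ℤ`. -/
noncomputable def expVec (g : FreeGroup X) : X → ℤ :=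
  (FreeGroup.lift (fun x => Multiplicative.ofAdd (Pi.single x 1 : X → ℤ)) g).toAdd

theorem expVec_one : expVec (1 : FreeGroup X) = 0 := by simp [expVec]

theorem expVec_mul (g h : FreeGroup X) : expVec (g * h) = expVec g + expVec h := by simp [expVec]

theorem expVec_inv (g : FreeGroup X) : expVec g⁻¹ = -expVec g := by simp [expVec]

theorem expVec_of [DecidableEq X] (x : X) : expVec (FreeGroup.of x) = Pi.single x 1 := by
  simp only [expVec, FreeGroup.lift_apply_of, toAdd_ofAdd]
  congr!

theorem expVec_letter [DecidableEq X] (l : X × Bool) :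
    expVec (letter l) = Pi.single l.1 (if l.2 then 1 else -1) := by
  obtain ⟨x, _ | _⟩ := l <;>
    simp [letter_true, letter_false, expVec_inv, expVec_of, ← Pi.single_neg]

theorem expVec_mk_cons (l : X × Bool) (w : List (X × Bool)) :
    expVec (FreeGroup.mk (l :: w)) = expVec (letter l) + expVec (FreeGroup.mk w) := by
  rw [mk_cons_eq, expVec_mul]

theorem abs_expVec_mk_le (w : List (X × Bool)) (x : X) :
    |expVec (FreeGroup.mk w) x| ≤ w.length := by
  classical
  induction w with
  | nil => simp [← FreeGroup.one_eq_mk, expVec_one]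
  | cons l w ih =>
    have hl : |expVec (letter l) x| ≤ 1 := by
      rw [expVec_letter, Pi.single_apply]
      split_ifs <;> simp
    rw [expVec_mk_cons, List.length_cons, Nat.cast_succ, add_comm]
    exact (abs_add_le _ _).trans (by linarith)

theorem height_eq_dotProduct [Fintype X] (v : X → ℝ) (g : FreeGroup X) :
    height v g = v ⬝ᵥ fun x => (expVec g x : ℝ) := by
  classical
  induction g using FreeGroup.induction_on with
  | C1 => simp [height_one, expVec_one]
  | of x => simp [height_of, expVec_of, dotProduct, Pi.single_apply]
  | inv_of x h => simpa [height_inv, expVec_inv, dotProduct] using h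
  | mul a b ha hb =>
    simp only [height_mul, ha, hb, expVec_mul, ← dotProduct_add]
    congr 1
    ext x
    simp

theorem continuous_height [Finite X] (g : FreeGroup X) : Continuous fun v => height v g := by
  cases nonempty_fintype X
  simp only [height_eq_dotProduct]
  fun_prop

end ExpVec

section UniformTameness

variable {X : Type*} {v : X → ℝ} {R : Set (FreeGroup X)}

theorem letterComm_swap (e : (X × Bool) × (X × Bool)) :
    letterComm e.swap = (letterComm e)⁻¹ := (commutatorElement_inv _ _).symm

/-- The product of the conjugates `g * letterComm e * g⁻¹` over the pairs `(g, e)` in a list. -/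
def conjProd (P : List (FreeGroup X × (X × Bool) × (X × Bool))) : FreeGroup X :=
  (P.map fun p => MulAut.conj p.1 (letterComm p.2)).prod

theorem conjProd_append (P P' : List (FreeGroup X × (X × Bool) × (X × Bool))) :
    conjProd (P ++ P') = conjProd P * conjProd P' := by
  simp only [conjProd, List.map_append, List.prod_append]

theorem conjProd_reverse_map_swap (P : List (FreeGroup X × (X × Bool) × (X × Bool))) :
    conjProd (P.map (Prod.map id Prod.swap)).reverse = (conjProd P)⁻¹ := by
  simp only [conjProd, List.prod_inv_reverse, List.map_reverse, List.map_map]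
  refine congrArg (fun L => (List.reverse L).prod) (List.map_congr_left fun p _ => ?_)
  simp [letterComm_swap, mul_assoc]

theorem exists_conjProd_of_mem_lowCommutators {t : ℝ} {h : FreeGroup X}
    (hh : h ∈ lowCommutators v t) :
    ∃ P, (∀ p ∈ P, -t ≤ height v p.1) ∧ conjProd P = h := by
  induction hh using Subgroup.closure_induction with
  | mem g hg =>
    obtain ⟨e, u, hu, rfl⟩ := hg
    exact ⟨[(u⁻¹, e)], by simpa [height_inv] using hu, by simp [conjProd]⟩
  | one => exact ⟨[], by simp, rfl⟩
  | mul a b _ _ ha hb =>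
    obtain ⟨P, hP, rfl⟩ := ha
    obtain ⟨P', hP', rfl⟩ := hb
    exact ⟨P ++ P', List.forall_mem_append.2 ⟨hP, hP'⟩, conjProd_append P P'⟩
  | inv a _ ha =>
    obtain ⟨P, hP, rfl⟩ := ha
    refine ⟨(P.map (Prod.map id Prod.swap)).reverse, fun p hp => ?_, conjProd_reverse_map_swap P⟩
    obtain ⟨q, hq, rfl⟩ := List.mem_map.1 (List.mem_reverse.1 hp)
    exact hP q hq

/-- Quantitative tameness: modulo `R`, at cost `B`, each commutator of letters is a product of at
most `D` commutators of letters, each conjugated by a word of length at most `D` and of height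
more than `1 / 2`. The bound `1 / 2`, against `1` in `Tame`, makes the condition open in `v`. -/
def TameWithin (R : Set (FreeGroup X)) (D B : ℕ) (v : X → ℝ) : Prop :=
  ∀ e, ∃ P, P.length ≤ D ∧ (∀ p ∈ P, freeNorm p.1 ≤ D ∧ 1 / 2 < height v p.1) ∧
    AreaEq R (letterComm e) (conjProd P) B

theorem TameWithin.mono {D B D' B' : ℕ} (h : TameWithin R D B v) (hD : D ≤ D') (hB : B ≤ B') :
    TameWithin R D' B' v := fun e =>
  let ⟨P, hPD, hP, hPB⟩ := h e
  ⟨P, hPD.trans hD, fun p hp => ⟨(hP p hp).1.trans hD, (hP p hp).2⟩, hPB.mono hB⟩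

theorem Tame.exists_conjProd (h : Tame R v) (e) :
    ∃ P B, (∀ p ∈ P, 1 ≤ height v p.1) ∧ AreaEq R (letterComm e) (conjProd P) B := by
  obtain ⟨g, hg, hgR⟩ := h e
  obtain ⟨P, hP, rfl⟩ := exists_conjProd_of_mem_lowCommutators hg
  obtain ⟨B, hB⟩ := AreaLe.exists_of_mem_normalClosure hgR
  exact ⟨P, B, by simpa using hP, by simpa using hB.areaEq_one.mul_left (conjProd P)⟩

theorem Tame.eventually_tameWithin [Finite X] (h : Tame R v) :
    ∃ D B, ∀ᶠ v' in nhds v, TameWithin R D B v' := by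
  choose P B hP hB using h.exists_conjProd
  obtain ⟨B₀, hB₀⟩ := (Set.finite_range B).bddAbove
  obtain ⟨D₁, hD₁⟩ := (Set.finite_range fun e => (P e).length).bddAbove
  obtain ⟨D₂, hD₂⟩ :=
    (Set.finite_iUnion fun e => ((P e).finite_toSet.image fun p => freeNorm p.1)).bddAbove
  have hev : ∀ᶠ v' in nhds v, ∀ e, ∀ p ∈ {p | p ∈ P e}, 1 / 2 < height v' p.1 :=
    Filter.eventually_all.2 fun e => (Filter.eventually_all_finite (P e).finite_toSet).2
      fun p hp => continuousAt_const.eventually_lt (continuous_height p.1).continuousAt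
        (lt_of_lt_of_le one_half_lt_one (hP e p hp))
  refine ⟨max D₁ D₂, B₀, hev.mono fun v' hv' e => ⟨P e, ?_, fun p hp => ⟨?_, hv' e p hp⟩, ?_⟩⟩
  · exact le_max_of_le_left (hD₁ ⟨e, rfl⟩)
  · exact le_max_of_le_right (hD₂ (Set.mem_iUnion.2 ⟨e, p, hp, rfl⟩))
  · exact (hB e).mono (hB₀ ⟨e, rfl⟩)

theorem isCompact_setOf_dotProduct_self_eq_one [Fintype X] :
    IsCompact {v : X → ℝ | v ⬝ᵥ v = 1} := by
  refine Metric.isCompact_of_isClosed_isBounded (isClosed_eq (by fun_prop) (by fun_prop))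
    ((Metric.isBounded_iff_subset_closedBall 0).2 ⟨1, fun v (hv : v ⬝ᵥ v = 1) => ?_⟩)
  refine mem_closedBall_zero_iff.2 ((pi_norm_le_iff_of_nonneg zero_le_one).2 fun x => ?_)
  rw [Real.norm_eq_abs, abs_le_one_iff_mul_self_le_one, ← hv]
  exact Finset.single_le_sum (f := fun x => v x * v x) (fun i _ => mul_self_nonneg _)
    (Finset.mem_univ x)

theorem exists_tameWithin_or_neg [Fintype X] (hR : R.Finite)
    (hmeta : IsMetabelian (FreeGroup X ⧸ Subgroup.normalClosure R)) :
    ∃ D B, ∀ v, v ⬝ᵥ v = 1 → TameWithin R D B v ∨ TameWithin R D B (-v) := by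
  refine isCompact_setOf_dotProduct_self_eq_one.induction_on
    (p := fun s => ∃ D B, ∀ v ∈ s, TameWithin R D B v ∨ TameWithin R D B (-v))
    ⟨0, 0, fun v hv => hv.elim⟩
    (fun s t hst ⟨D, B, h⟩ => ⟨D, B, fun v hv => h v (hst hv)⟩) ?_ fun v hv => ?_
  · rintro s t ⟨D, B, h⟩ ⟨D', B', h'⟩
    refine ⟨max D D', max B B', fun v hv => ?_⟩
    rcases hv with hv | hv
    · exact (h v hv).imp (·.mono (le_max_left _ _) (le_max_left _ _))
        (·.mono (le_max_left _ _) (le_max_left _ _))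
    · exact (h' v hv).imp (·.mono (le_max_right _ _) (le_max_right _ _))
        (·.mono (le_max_right _ _) (le_max_right _ _))
  · have hv0 : v ≠ 0 := by rintro rfl; simp at hv
    rcases tame_or_tame_neg hR hmeta hv0 with h | h
    · obtain ⟨D, B, h⟩ := h.eventually_tameWithin
      exact ⟨_, mem_nhdsWithin_of_mem_nhds h, D, B, fun v hv => .inl hv⟩
    · obtain ⟨D, B, h⟩ := h.eventually_tameWithin
      exact ⟨_, mem_nhdsWithin_of_mem_nhds ((continuous_neg.tendsto v).eventually h), D, B,
        fun v hv => .inr hv⟩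

end UniformTameness

section AreaCommute

variable {G : Type*} [Group G] {R : Set G} {a b c : G} {N M : ℕ}

/-- `a` and `b` commute modulo `R` at cost `N`. -/
def AreaCommute {G : Type*} [Group G] (R : Set G) (a b : G) (N : ℕ) : Prop :=
  AreaEq R (a * b) (b * a) N

theorem AreaCommute.symm (h : AreaCommute R a b N) : AreaCommute R b a N := AreaEq.symm h

theorem AreaCommute.mono (h : AreaCommute R a b N) (hNM : N ≤ M) : AreaCommute R a b M :=
  AreaEq.mono h hNM

theorem AreaCommute.conj (h : AreaCommute R a b N) (g : G) :
    AreaCommute R (MulAut.conj g a) (MulAut.conj g b) N := by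
  simpa only [AreaCommute, map_mul] using AreaEq.conj h g

theorem AreaCommute.conj_areaEq (h : AreaCommute R a b N) : AreaEq R (MulAut.conj a b) b N := by
  simpa using AreaEq.mul_right h a⁻¹

theorem AreaCommute.of_areaEq (h : AreaCommute R a b N) (hbc : AreaEq R c b M) :
    AreaCommute R a c (2 * M + N) :=
  ((hbc.mul_left a).trans (AreaEq.trans h (hbc.symm.mul_right a))).mono (by omega)

theorem AreaCommute.list_prod {L : List G} (h : ∀ c ∈ L, AreaCommute R a c N) :
    AreaCommute R a L.prod (L.length * N) := by
  induction L with
  | nil => exact AreaEq.of_eq (by simp) _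
  | cons c L ih =>
    obtain ⟨hc, hL⟩ := List.forall_mem_cons.1 h
    have hac := AreaEq.mul_right hc L.prod
    have hcL := AreaEq.mul_left (ih hL) c
    simp only [mul_assoc] at hac hcL
    rw [List.prod_cons, List.length_cons, add_mul, one_mul, add_comm]
    exact (hac.trans hcL).trans (AreaEq.of_eq (mul_assoc _ _ _).symm 0)

end AreaCommute

section ConjCommute

variable {X : Type*} {R : Set (FreeGroup X)} {g : FreeGroup X} {b b' : ℕ}

/-- Modulo `R` and at cost `b`, every commutator of letters commutes with the conjugate by `g` of
every commutator of letters. -/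
def ConjCommute (R : Set (FreeGroup X)) (g : FreeGroup X) (b : ℕ) : Prop :=
  ∀ e d, AreaCommute R (letterComm e) (MulAut.conj g (letterComm d)) b

theorem ConjCommute.mono (h : ConjCommute R g b) (hb : b ≤ b') : ConjCommute R g b' :=
  fun e d => (h e d).mono hb

theorem ConjCommute.inv (h : ConjCommute R g b) : ConjCommute R g⁻¹ b := fun e d => by
  simpa only [← MulAut.mul_apply, ← map_mul, inv_mul_cancel, map_one, MulAut.one_apply]
    using (h d e).symm.conj g⁻¹

theorem ConjCommute.areaEq_swap (h : ConjCommute R g b) (l m d) :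
    AreaEq R (MulAut.conj (letter l * (letter m * g)) (letterComm d))
      (MulAut.conj (letter m * (letter l * g)) (letterComm d)) b := by
  have key := (h (letterInv l, letterInv m) d).conj_areaEq.conj (letter m * letter l)
  simp only [← MulAut.mul_apply, ← map_mul, letterComm, letter_letterInv, commutatorElement_def,
    mul_assoc, inv_inv, mul_inv_cancel_left] at key
  exact key

end ConjCommute

section Canonical

open FreeGroup (mk)

variable {X : Type*} {R : Set (FreeGroup X)} {f : X → ℤ} {w w' : List (X × Bool)}

/-- Along a canonical word the rank `f` of the generators does not increase, and the occurrences of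
a generator all have the same sign. -/
def Canonical (f : X → ℤ) (w : List (X × Bool)) : Prop :=
  w.Pairwise fun a b => f b.1 ≤ f a.1 ∧ (b.1 = a.1 → a.2 = b.2)

theorem Canonical.tail {a : X × Bool} (h : Canonical f (a :: w)) : Canonical f w :=
  (List.pairwise_cons.1 h).2

theorem Canonical.rel_head {a m : X × Bool} (h : Canonical f (a :: w)) (hm : m ∈ a :: w) :
    f m.1 ≤ f a.1 ∧ (m.1 = a.1 → a.2 = m.2) :=
  (List.mem_cons.1 hm).elim (fun hma => hma ▸ ⟨le_rfl, fun _ => rfl⟩) ((List.pairwise_cons.1 h).1 m)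

theorem Canonical.cons_cons (hf : Injective f) {l a : X × Bool} (h : Canonical f (a :: w))
    (hla : f a.1 ≤ f l.1 ∧ (a.1 = l.1 → l.2 = a.2)) : Canonical f (l :: a :: w) := by
  refine List.pairwise_cons.2 ⟨List.forall_mem_cons.2 ⟨hla, fun x hx => ?_⟩, h⟩
  obtain ⟨hxa, hsign⟩ := (List.pairwise_cons.1 h).1 x hx
  refine ⟨hxa.trans hla.1, fun hxl => ?_⟩
  have hal : a.1 = l.1 := hf (le_antisymm hla.1 (hxl ▸ hxa))
  exact (hla.2 hal).trans (hsign (hxl.trans hal.symm))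

theorem Canonical.invRev (h : Canonical f w) : Canonical (-f) (FreeGroup.invRev w) := by
  refine List.pairwise_reverse.2 (List.pairwise_map.2 (h.imp fun {a b} hab => ?_))
  exact ⟨neg_le_neg hab.1, fun hba => congrArg not (hab.2 hba.symm).symm⟩

theorem eq_or_eq_letterInv {l a : X × Bool} (h : a.1 = l.1) : l.2 = a.2 ∨ l = letterInv a := by
  obtain ⟨x, p⟩ := l
  obtain ⟨y, q⟩ := a
  cases h
  cases p <;> cases q <;> simp [letterInv]

/-- Bubble sort: the letter `l` travels to its place in the canonical word `w`, and each
transposition of adjacent letters costs one use of `ConjCommute`. -/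
theorem Canonical.exists_insert (hf : Injective f) (b : ℕ) (l : X × Bool) (hw : Canonical f w)
    (H : ∀ t, t <:+ w → ConjCommute R (mk t) (b * 2 ^ t.length)) :
    ∃ w', Canonical f w' ∧ expVec (mk w') = expVec (mk (l :: w)) ∧ w'.length ≤ w.length + 1 ∧
      (∀ x ∈ w', x = l ∨ x ∈ w) ∧ ∀ d, AreaEq R (MulAut.conj (mk (l :: w)) (letterComm d))
        (MulAut.conj (mk w') (letterComm d)) (b * 2 ^ w.length) := by
  induction w with
  | nil => exact ⟨[l], List.pairwise_singleton _ _, rfl, le_rfl, by simp, fun d => .refl _ _⟩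
  | cons a w ih =>
    rcases lt_or_ge (f l.1) (f a.1) with hlt | hle
    · obtain ⟨w', hw', hvec, hlen, hmem, harea⟩ :=
        ih hw.tail fun t ht => H t (ht.trans (List.suffix_cons a w))
      refine ⟨a :: w', List.pairwise_cons.2 ⟨fun x hx => ?_, hw'⟩, ?_, Nat.succ_le_succ hlen, ?_,
        fun d => ?_⟩
      · rcases hmem x hx with rfl | hx
        · exact ⟨hlt.le, fun h => absurd (h ▸ hlt) (lt_irrefl _)⟩
        · exact (List.pairwise_cons.1 hw).1 x hx
      · simp only [expVec_mk_cons, hvec, add_left_comm]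
      · simp only [List.mem_cons]
        rintro x (rfl | hx)
        · exact .inr (.inl rfl)
        · exact (hmem x hx).imp_right .inr
      · have hswap := (H w (List.suffix_cons a w)).areaEq_swap l a d
        have hrest := (harea d).conj (letter a)
        simp only [← MulAut.mul_apply, ← map_mul, ← mk_cons_eq] at hswap hrest
        exact (hswap.trans hrest).mono (by rw [List.length_cons, pow_succ]; linarith)
    · by_cases hla : a.1 = l.1 → l.2 = a.2
      · exact ⟨l :: a :: w, hw.cons_cons hf ⟨hle, hla⟩, rfl, le_rfl, by simp, fun d => .refl _ _⟩
      · obtain ⟨hal, hne⟩ := Classical.not_imp.1 hla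
        obtain rfl := (eq_or_eq_letterInv hal).resolve_left hne
        have hmk : mk (letterInv a :: a :: w) = mk w := by
          simp only [mk_cons_eq, letter_letterInv, inv_mul_cancel_left]
        exact ⟨w, hw.tail, by rw [hmk], by rw [List.length_cons]; omega,
          fun x hx => .inr (List.mem_cons_of_mem a hx), fun d => by rw [hmk]; exact .refl _ _⟩

end Canonical

section LetterSign

open FreeGroup (mk)

variable {X : Type*} {f : X → ℤ} {a m : X × Bool} {w w' : List (X × Bool)}

/-- The exponent `1` or `-1` with which a letter is a power of a generator. -/
def letterSign (l : X × Bool) : ℤ := if l.2 then 1 else -1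

theorem letterSign_mul_expVec_letter_self (a : X × Bool) :
    letterSign a * expVec (letter a) a.1 = 1 := by
  classical
  rw [letterSign, expVec_letter, Pi.single_eq_same]
  split_ifs <;> rfl

theorem letterSign_mul_expVec_letter_nonpos (h : a ≠ m) :
    letterSign a * expVec (letter m) a.1 ≤ 0 := by
  classical
  obtain ⟨x, p⟩ := a
  obtain ⟨y, q⟩ := m
  rw [letterSign, expVec_letter, Pi.single_apply]
  by_cases hxy : x = y
  · subst hxy
    cases p <;> cases q <;> simp_all
  · simp [hxy]

theorem mem_of_letterSign_mul_expVec_pos (h : 0 < letterSign a * expVec (mk w) a.1) : a ∈ w := by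
  induction w with
  | nil => simp [← FreeGroup.one_eq_mk, expVec_one] at h
  | cons m w ih =>
    by_contra ham
    obtain ⟨hne, haw⟩ := not_or.1 (mt List.mem_cons.2 ham)
    rw [expVec_mk_cons, Pi.add_apply, mul_add] at h
    linarith [not_lt.1 (mt ih haw), letterSign_mul_expVec_letter_nonpos hne]

namespace Canonical

theorem letterSign_mul_expVec_nonneg (h : Canonical f (a :: w)) :
    0 ≤ letterSign a * expVec (mk w) a.1 := by
  classical
  replace h := (List.pairwise_cons.1 h).1
  induction w with
  | nil => simp [← FreeGroup.one_eq_mk, expVec_one]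
  | cons m w ih =>
    obtain ⟨⟨-, hm⟩, hw⟩ := List.forall_mem_cons.1 h
    rw [expVec_mk_cons, Pi.add_apply, mul_add]
    refine add_nonneg ?_ (ih hw)
    rw [letterSign, expVec_letter, Pi.single_apply]
    by_cases ham : a.1 = m.1
    · rw [if_pos ham, hm ham.symm]
      split_ifs <;> simp
    · rw [if_neg ham, mul_zero]

theorem head_mem (h : Canonical f (a :: w)) (hww' : expVec (mk (a :: w)) = expVec (mk w')) :
    a ∈ w' := by
  refine mem_of_letterSign_mul_expVec_pos ?_
  rw [← hww', expVec_mk_cons, Pi.add_apply, mul_add, letterSign_mul_expVec_letter_self]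
  linarith [h.letterSign_mul_expVec_nonneg]

theorem eq_of_expVec_eq (hf : Injective f) (h : Canonical f w) (h' : Canonical f w')
    (hww' : expVec (mk w) = expVec (mk w')) : w = w' := by
  induction w generalizing w' with
  | nil =>
    cases w' with
    | nil => rfl
    | cons b w' => exact absurd (h'.head_mem hww'.symm) List.not_mem_nil
  | cons a w ih =>
    cases w' with
    | nil => exact absurd (h.head_mem hww') List.not_mem_nil
    | cons b w' =>
      obtain ⟨hle, hsign⟩ := h'.rel_head (h.head_mem hww')
      have hab : a.1 = b.1 := hf (hle.antisymm (h.rel_head (h'.head_mem hww'.symm)).1)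
      obtain rfl : a = b := Prod.ext hab (hsign hab).symm
      rw [ih h.tail h'.tail (by simpa only [expVec_mk_cons, add_right_inj] using hww')]

end Canonical

end LetterSign

section CanonicalNorm

open FreeGroup (mk)

variable {X : Type*} [Fintype X]

/-- The squared Euclidean norm of the exponent vector of a word. -/
noncomputable def sqNorm (g : FreeGroup X) : ℤ := expVec g ⬝ᵥ expVec g

theorem sqNorm_nonneg (g : FreeGroup X) : 0 ≤ sqNorm g :=
  Finset.sum_nonneg fun _ _ => mul_self_nonneg _

theorem sqNorm_mul (g h : FreeGroup X) :
    sqNorm (g * h) = sqNorm g + 2 * (expVec g ⬝ᵥ expVec h) + sqNorm h := by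
  simp only [sqNorm, expVec_mul, add_dotProduct, dotProduct_add, dotProduct_comm (expVec h)]
  ring

theorem sqNorm_one : sqNorm (1 : FreeGroup X) = 0 := by simp [sqNorm, expVec_one]

theorem sqNorm_inv (g : FreeGroup X) : sqNorm g⁻¹ = sqNorm g := by
  simp only [sqNorm, expVec_inv, neg_dotProduct_neg]

theorem expVec_letter_dotProduct (l : X × Bool) (a : X → ℤ) :
    expVec (letter l) ⬝ᵥ a = letterSign l * a l.1 := by
  classical
  rw [expVec_letter, single_dotProduct, letterSign]

theorem sqNorm_letter (l : X × Bool) : sqNorm (letter l) = 1 := by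
  rw [sqNorm, expVec_letter_dotProduct, letterSign_mul_expVec_letter_self]

theorem sqNorm_mk_le (w : List (X × Bool)) : sqNorm (mk w) ≤ w.length ^ 2 := by
  induction w with
  | nil => simp [← FreeGroup.one_eq_mk, sqNorm_one]
  | cons l w ih =>
    have hl : expVec (letter l) ⬝ᵥ expVec (mk w) ≤ w.length := by
      have := abs_le.1 (abs_expVec_mk_le w l.1)
      rw [expVec_letter_dotProduct, letterSign]
      split_ifs <;> linarith
    rw [mk_cons_eq, sqNorm_mul, sqNorm_letter, List.length_cons]
    push_cast
    linarith

theorem sqNorm_mk_le_of_length_le {w : List (X × Bool)} {m : ℕ} (h : w.length ≤ m) :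
    sqNorm (mk w) ≤ m ^ 2 :=
  (sqNorm_mk_le w).trans (by gcongr)

namespace Canonical

variable {R : Set (FreeGroup X)} {f : X → ℤ} {a : X × Bool} {p t w : List (X × Bool)}

theorem dotProduct_nonneg (h : Canonical f (p ++ t)) :
    0 ≤ expVec (mk p) ⬝ᵥ expVec (mk t) := by
  induction p with
  | nil => simp [← FreeGroup.one_eq_mk, expVec_one]
  | cons a p ih =>
    rw [expVec_mk_cons, add_dotProduct]
    have hat : Canonical f (a :: t) := h.sublist ((List.sublist_append_right p t).cons_cons a)
    rw [expVec_letter_dotProduct]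
    exact add_nonneg hat.letterSign_mul_expVec_nonneg (ih h.tail)

theorem sqNorm_tail_lt (h : Canonical f (a :: w)) : sqNorm (mk w) < sqNorm (mk (a :: w)) := by
  rw [mk_cons_eq, sqNorm_mul, sqNorm_letter, expVec_letter_dotProduct]
  linarith [h.letterSign_mul_expVec_nonneg]

theorem sqNorm_le_of_suffix (h : Canonical f w) (ht : t <:+ w) :
    sqNorm (mk t) ≤ sqNorm (mk w) := by
  induction w with
  | nil => rw [List.suffix_nil.1 ht]
  | cons a w ih =>
    rcases List.suffix_cons_iff.1 ht with rfl | ht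
    · exact le_rfl
    · exact (ih h.tail ht).trans h.sqNorm_tail_lt.le

theorem length_le_sqNorm (h : Canonical f w) : (w.length : ℤ) ≤ sqNorm (mk w) := by
  induction w with
  | nil => exact sqNorm_nonneg _
  | cons a w ih =>
    have := ih h.tail
    have := h.sqNorm_tail_lt
    push_cast [List.length_cons]
    linarith

theorem exists_areaEq (hf : Injective f) (b : ℕ) (w : List (X × Bool))
    (H : ∀ s, s <:+ w → ∀ t, Canonical f t → sqNorm (mk t) ≤ sqNorm (mk s) →
      ConjCommute R (mk t) (b * 2 ^ t.length)) :
    ∃ w', Canonical f w' ∧ expVec (mk w') = expVec (mk w) ∧ w'.length ≤ w.length ∧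
      ∀ d, AreaEq R (MulAut.conj (mk w) (letterComm d)) (MulAut.conj (mk w') (letterComm d))
        (b * 2 ^ w.length) := by
  induction w with
  | nil => exact ⟨[], List.Pairwise.nil, rfl, le_rfl, fun d => .refl _ _⟩
  | cons l w ih =>
    obtain ⟨w₁, hw₁, hvec₁, hlen₁, harea₁⟩ :=
      ih fun s hs => H s (hs.trans (List.suffix_cons l w))
    obtain ⟨w₂, hw₂, hvec₂, hlen₂, -, harea₂⟩ := hw₁.exists_insert (R := R) hf b l fun t ht =>
      H w (List.suffix_cons l w) t (hw₁.sublist ht.sublist)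
        ((hw₁.sqNorm_le_of_suffix ht).trans_eq (by rw [sqNorm, sqNorm, hvec₁]))
    refine ⟨w₂, hw₂, by rw [hvec₂, expVec_mk_cons, expVec_mk_cons, hvec₁],
      hlen₂.trans (Nat.succ_le_succ hlen₁), fun d => ?_⟩
    have hl := (harea₁ d).conj (letter l)
    simp only [← MulAut.mul_apply, ← map_mul, ← mk_cons_eq] at hl
    refine (hl.trans (harea₂ d)).mono ?_
    calc b * 2 ^ w.length + b * 2 ^ w₁.length
        ≤ b * 2 ^ w.length + b * 2 ^ w.length := by gcongr; norm_num
      _ = b * 2 ^ (l :: w).length := by rw [List.length_cons, pow_succ]; ring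

theorem conjCommute_of_suffixes (hf : Injective f) {b : ℕ} {w : List (X × Bool)}
    (H : ∀ s, s <:+ w → ∀ t, Canonical f t → sqNorm (mk t) ≤ sqNorm (mk s) →
      ConjCommute R (mk t) (b * 2 ^ t.length)) :
    ConjCommute R (mk w) (3 * (b * 2 ^ w.length)) := by
  obtain ⟨w', hw', hvec, hlen, harea⟩ := exists_areaEq hf b w H
  have hw'b := H w (List.suffix_refl w) w' hw' (by rw [sqNorm, sqNorm, hvec])
  have hb : b * 2 ^ w'.length ≤ b * 2 ^ w.length := by gcongr; norm_num
  exact fun e d => ((hw'b e d).of_areaEq (harea d)).mono (by omega)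

end Canonical

end CanonicalNorm

section ExponentialConjCommute

open FreeGroup (mk)

variable {X : Type*} {R : Set (FreeGroup X)}

theorem IsMetabelian.exists_areaCommute {G ι : Type*} [Group G] [Finite ι] {R : Set G}
    (h : IsMetabelian (G ⧸ Subgroup.normalClosure R)) {a b : ι → G}
    (ha : ∀ i, a i ∈ commutator G) (hb : ∀ i, b i ∈ commutator G) :
    ∃ N, ∀ i, AreaCommute R (a i) (b i) N := by
  obtain ⟨N, hN⟩ := AreaLe.exists_of_forall_mem_normalClosure fun i =>
    h.commutator_sup_le (Subgroup.commutator_mem_commutator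
      (Subgroup.mem_sup_left (ha i)) (Subgroup.mem_sup_left (hb i)))
  exact ⟨N, fun i => by
    simpa [AreaCommute, AreaEq, commutatorElement_def, mul_assoc] using hN i⟩

theorem exists_conjCommute_of_length_le [Finite X]
    (hmeta : IsMetabelian (FreeGroup X ⧸ Subgroup.normalClosure R)) (M : ℕ) :
    ∃ b, ∀ w : List (X × Bool), w.length ≤ M → ConjCommute R (mk w) b := by
  have := (List.finite_length_le (X × Bool) M).to_subtype
  obtain ⟨b, hb⟩ := hmeta.exists_areaCommute
    (ι := {w : List (X × Bool) | w.length ≤ M} × ((X × Bool) × (X × Bool)) × _ × _)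
    (fun i => letterComm_mem_commutator i.2.1)
    fun i => Subgroup.Normal.conj_mem inferInstance _ (letterComm_mem_commutator i.2.2) (mk i.1.1)
  exact ⟨b, fun w hw e d => hb (⟨w, hw⟩, e, d)⟩

section EuclideanInduction

variable [Fintype X] {f : X → ℤ} {w : List (X × Bool)} {D B b : ℕ} {r : ℝ}

/-- The proof adds `0 ≤ 2 * ⟪p, t⟫`, where `p` and `t` do not cancel as `p ++ t` is canonical, and
`0 ≤ ‖p * u‖ ^ 2` to the expansion of `‖t * u‖ ^ 2`. -/
theorem Canonical.sqNorm_mul_le {p t : List (X × Bool)} (h : Canonical f (p ++ t))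
    {u : FreeGroup X} (hu : sqNorm u ≤ D ^ 2) (hr : r ^ 2 = sqNorm (mk (p ++ t)))
    (hDr : 4 * (D : ℝ) ^ 2 + D + 1 ≤ r)
    (hdot : ((expVec (mk (p ++ t)) ⬝ᵥ expVec u : ℤ) : ℝ) ≤ -(r / 2)) :
    (sqNorm (mk t * u) : ℝ) ≤ (r - 1 / 4) ^ 2 := by
  have hpt : (0 : ℝ) ≤ (expVec (mk p) ⬝ᵥ expVec (mk t) : ℤ) := mod_cast h.dotProduct_nonneg
  have hpu : (0 : ℝ) ≤ sqNorm (mk p * u) := mod_cast sqNorm_nonneg _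
  have hu' : (sqNorm u : ℝ) ≤ D ^ 2 := mod_cast hu
  rw [← FreeGroup.mul_mk, sqNorm_mul] at hr
  rw [← FreeGroup.mul_mk, expVec_mul, add_dotProduct] at hdot
  rw [sqNorm_mul] at hpu ⊢
  push_cast at hr hdot hpu ⊢
  linarith [sq_nonneg (D : ℝ)]

theorem Canonical.sqNorm_suffix_append_le (h : Canonical f w) {u : List (X × Bool)}
    (hu : u.length ≤ D) (hr : r ^ 2 = sqNorm (mk w)) (hDr : 4 * (D : ℝ) ^ 2 + D + 1 ≤ r)
    (hdot : ((expVec (mk w) ⬝ᵥ expVec (mk u) : ℤ) : ℝ) ≤ -(r / 2))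
    {s : List (X × Bool)} (hs : s <:+ w ++ u) : (sqNorm (mk s) : ℝ) ≤ (r - 1 / 4) ^ 2 := by
  obtain ⟨p, hp⟩ := hs
  obtain ⟨t, rfl, rfl⟩ | ⟨t, -, rfl⟩ := List.append_eq_append_iff.1 hp
  · rw [← FreeGroup.mul_mk]
    exact h.sqNorm_mul_le (sqNorm_mk_le_of_length_le hu) hr hDr hdot
  · have hs : (sqNorm (mk s) : ℝ) ≤ (D : ℝ) ^ 2 := by
      exact_mod_cast sqNorm_mk_le_of_length_le ((List.suffix_append t s).length_le.trans hu)
    exact hs.trans (pow_le_pow_left₀ D.cast_nonneg (by nlinarith [sq_nonneg (D : ℝ)]) 2)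

/-- Tameness in the direction opposite to `w` rewrites the conjugates by `w` as products of
conjugates by words `w * u` that are shorter in the Euclidean norm. -/
theorem Canonical.conjCommute_of_tameWithin (hf : Injective f) (hw : Canonical f w)
    (hr : r ^ 2 = sqNorm (mk w)) (hDr : 4 * (D : ℝ) ^ 2 + D + 1 ≤ r)
    (hD : TameWithin R D B (-(r⁻¹ • fun x => (expVec (mk w) x : ℝ))))
    (H : ∀ t, Canonical f t → (sqNorm (mk t) : ℝ) ≤ (r - 1 / 4) ^ 2 →
      ConjCommute R (mk t) (b * 2 ^ t.length)) :
    ConjCommute R (mk w) (2 * B + D * (3 * (b * 2 ^ (w.length + D)))) := by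
  have hr0 : 0 < r := by nlinarith [sq_nonneg (D : ℝ), Nat.cast_nonneg (α := ℝ) D]
  have hshort : ∀ u, freeNorm u ≤ D → 1 / 2 < height (-(r⁻¹ • fun x => (expVec (mk w) x : ℝ))) u →
      ConjCommute R (mk w * u) (3 * (b * 2 ^ (w.length + D))) := by
    intro u hu hhu
    obtain ⟨u, rfl, hlen⟩ := exists_mk_eq_length_eq_freeNorm u
    rw [← hlen] at hu
    have hdot : ((expVec (mk w) ⬝ᵥ expVec (mk u) : ℤ) : ℝ) ≤ -(r / 2) := by
      rw [height_eq_dotProduct, neg_dotProduct, smul_dotProduct, smul_eq_mul, lt_neg,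
        inv_mul_lt_iff₀ hr0] at hhu
      rw [dotProduct, Int.cast_sum]
      simp only [dotProduct, ← Int.cast_mul] at hhu
      linarith
    rw [FreeGroup.mul_mk]
    refine (conjCommute_of_suffixes hf fun s hs t ht hts => H t ht ?_).mono
      (b' := 3 * (b * 2 ^ (w.length + D))) ?_
    · exact (Int.cast_le.2 hts).trans (hw.sqNorm_suffix_append_le hu hr hDr hdot hs)
    · rw [List.length_append]
      gcongr
      norm_num
  intro e d
  obtain ⟨P, hPD, hP, hPB⟩ := hD d
  refine AreaCommute.of_areaEq ?_ (hPB.conj (mk w))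
  rw [conjProd, map_list_prod, List.map_map]
  refine (AreaCommute.list_prod (List.forall_mem_map.2 fun p hp => ?_)).mono
    (Nat.mul_le_mul_right _ (by rwa [List.length_map]))
  simpa only [comp_apply, ← MulAut.mul_apply, ← map_mul] using
    hshort p.1 (hP p hp).1 (hP p hp).2 e p.2

/-- One step of the induction on the Euclidean norm. A word of norm `r` is tame in the direction
of its inverse or in its own direction; in the second case its inverse is used instead. -/
theorem conjCommute_step {ρ : ℝ}
    (hDB : ∀ v : X → ℝ, v ⬝ᵥ v = 1 → TameWithin R D B v ∨ TameWithin R D B (-v))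
    (hρ : 4 * (D : ℝ) ^ 2 + D + 1 ≤ ρ)
    (H : ∀ f : X → ℤ, Injective f → ∀ t, Canonical f t → (sqNorm (mk t) : ℝ) ≤ ρ ^ 2 →
      ConjCommute R (mk t) (b * 2 ^ t.length))
    (hf : Injective f) (hw : Canonical f w) (hlt : ρ ^ 2 < sqNorm (mk w))
    (hle : (sqNorm (mk w) : ℝ) ≤ (ρ + 1 / 4) ^ 2) :
    ConjCommute R (mk w) (2 * B + D * (3 * (b * 2 ^ (w.length + D)))) := by
  have hρ0 : 1 ≤ ρ := by nlinarith [sq_nonneg (D : ℝ), Nat.cast_nonneg (α := ℝ) D]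
  set r := √(sqNorm (mk w) : ℝ)
  have hr2 : r ^ 2 = sqNorm (mk w) := Real.sq_sqrt (mod_cast sqNorm_nonneg _)
  have hρr : ρ < r := Real.lt_sqrt_of_sq_lt hlt
  have hrρ : r ≤ ρ + 1 / 4 := Real.sqrt_le_iff.2 ⟨by linarith, hle⟩
  have hH (f : X → ℤ) (hf : Injective f) (t) (ht : Canonical f t)
      (htr : (sqNorm (mk t) : ℝ) ≤ (r - 1 / 4) ^ 2) : ConjCommute R (mk t) (b * 2 ^ t.length) :=
    H f hf t ht (htr.trans (pow_le_pow_left₀ (by linarith) (by linarith) 2))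
  set v : X → ℝ := r⁻¹ • fun x => (expVec (mk w) x : ℝ) with hv
  have hunit : v ⬝ᵥ v = 1 := by
    have hdot : (fun x => (expVec (mk w) x : ℝ)) ⬝ᵥ (fun x => (expVec (mk w) x : ℝ)) = r ^ 2 := by
      rw [hr2, sqNorm]
      simp [dotProduct]
    rw [hv, smul_dotProduct, dotProduct_smul, hdot, smul_eq_mul, smul_eq_mul]
    have hr0 : r ≠ 0 := (by linarith : 0 < r).ne'
    field_simp
  rcases hDB v hunit with h | h
  · have hinv : mk (FreeGroup.invRev w) = (mk w)⁻¹ := FreeGroup.inv_mk.symm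
    have := hw.invRev.conjCommute_of_tameWithin (R := R) (B := B) (b := b) (D := D) (r := r)
      (neg_injective.comp hf) (by rw [hinv, sqNorm_inv, hr2]) (hρ.trans hρr.le)
      (by
        convert h using 1
        ext x
        simp only [hinv, expVec_inv, hv, Pi.neg_apply, Pi.smul_apply, Int.cast_neg, smul_neg,
          neg_neg]) (hH (-f) (neg_injective.comp hf))
    simpa only [hinv, inv_inv, FreeGroup.invRev_length] using this.inv
  · exact hw.conjCommute_of_tameWithin hf hr2 (hρ.trans hρr.le) h (hH f hf)

/-- `Λ` is the factor lost in one step, and the Euclidean norm grows by `1 / 4` in each step. -/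
theorem exists_conjCommute_of_canonical (hR : R.Finite)
    (hmeta : IsMetabelian (FreeGroup X ⧸ Subgroup.normalClosure R)) :
    ∃ Λ b, 1 ≤ Λ ∧ ∀ (n : ℕ) (f : X → ℤ), Injective f → ∀ w, Canonical f w →
      (sqNorm (mk w) : ℝ) ≤ (n / 4) ^ 2 → ConjCommute R (mk w) (b * Λ ^ n * 2 ^ w.length) := by
  obtain ⟨D, B, hDB⟩ := exists_tameWithin_or_neg hR hmeta
  set ρ := 4 * D ^ 2 + D + 1 with hρ
  obtain ⟨b₀, hb₀⟩ := exists_conjCommute_of_length_le hmeta (ρ ^ 2)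
  set Λ := 2 * B + 3 * D * 2 ^ D + 1 with hΛ
  suffices ∀ (n : ℕ) (f : X → ℤ), Injective f → ∀ w, Canonical f w →
      (sqNorm (mk w) : ℝ) ≤ (ρ + n / 4) ^ 2 →
      ConjCommute R (mk w) ((b₀ + 1) * Λ ^ n * 2 ^ w.length) from
    ⟨Λ, b₀ + 1, by omega, fun n f hf w hw hn => this n f hf w hw (hn.trans (by gcongr; simp))⟩
  intro n
  induction n with
  | zero =>
    intro f _ w hw hwρ
    have hlen : (w.length : ℤ) ≤ ρ ^ 2 :=
      hw.length_le_sqNorm.trans (by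
        rw [Nat.cast_zero, zero_div, add_zero] at hwρ
        exact_mod_cast hwρ)
    refine (hb₀ w (by exact_mod_cast hlen)).mono ?_
    nlinarith [Nat.one_le_two_pow (n := w.length)]
  | succ n ih =>
    intro f hf w hw hwρ
    set b := (b₀ + 1) * Λ ^ n with hb
    have hpos : 0 < b * 2 ^ w.length := by positivity
    by_cases hsmall : (sqNorm (mk w) : ℝ) ≤ (ρ + n / 4) ^ 2
    · refine (ih f hf w hw hsmall).mono ?_
      rw [pow_succ, ← mul_assoc, ← hb]
      gcongr
      exact Nat.le_mul_of_pos_right _ (by omega)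
    · refine (conjCommute_step hDB (ρ := ρ + n / 4) ?_ ih hf hw (not_le.1 hsmall) ?_).mono ?_
      · rw [hρ]
        push_cast
        linarith [(by positivity : (0 : ℝ) ≤ n / 4)]
      · refine hwρ.trans_eq ?_
        push_cast
        ring
      · rw [pow_succ Λ, ← mul_assoc (b₀ + 1), ← hb, pow_add, hΛ]
        nlinarith [Nat.mul_le_mul_left (2 * B) hpos]

end EuclideanInduction

theorem three_mul_mul_pow_mul_two_pow_le {Λ m n : ℕ} (b : ℕ) (hΛ : 1 ≤ Λ) (hn : n ≤ m) :
    3 * (b * Λ ^ (4 * m) * 2 ^ n) ≤ (3 * ((b + 1) * Λ ^ 4 * 2)) ^ (m + 1) := by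
  rw [mul_pow, mul_pow, mul_pow, ← pow_mul]
  gcongr
  · exact Nat.le_self_pow (by omega) 3
  · exact (Nat.le_succ b).trans (Nat.le_self_pow (by omega) _)
  · omega
  · norm_num
  · omega

theorem exists_conjCommute_pow [Finite X] (hR : R.Finite)
    (hmeta : IsMetabelian (FreeGroup X ⧸ Subgroup.normalClosure R)) :
    ∃ K, 1 ≤ K ∧ ∀ m : ℕ, (∀ g, freeNorm g ≤ m → ConjCommute R g (K ^ (m + 1))) ∧
      ∀ g g', freeNorm g ≤ m → freeNorm g' ≤ m → expVec g = expVec g' → ∀ d,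
        AreaEq R (MulAut.conj g (letterComm d)) (MulAut.conj g' (letterComm d)) (K ^ (m + 1)) := by
  cases nonempty_fintype X
  obtain ⟨Λ, b, hΛ, hcanon⟩ := exists_conjCommute_of_canonical hR hmeta
  let f : X → ℤ := fun x => (Fintype.equivFin X x : ℕ)
  have hf : Injective f :=
    Nat.cast_injective.comp (Fin.val_injective.comp (Fintype.equivFin X).injective)
  have hc (m : ℕ) (t) (ht : Canonical f t) (hm : sqNorm (mk t) ≤ m ^ 2) :
      ConjCommute R (mk t) (b * Λ ^ (4 * m) * 2 ^ t.length) := by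
    refine hcanon (4 * m) f hf t ht ?_
    rw [Nat.cast_mul, Nat.cast_ofNat, mul_div_cancel_left₀ _ four_ne_zero]
    exact_mod_cast hm
  have hsuff {m : ℕ} {w : List (X × Bool)} (hw : w.length ≤ m) (s) (hs : s <:+ w) (t)
      (ht : Canonical f t) (hts : sqNorm (mk t) ≤ sqNorm (mk s)) :=
    hc m t ht (hts.trans (sqNorm_mk_le_of_length_le (hs.length_le.trans hw)))
  set K := 3 * ((b + 1) * Λ ^ 4 * 2) with hK
  have hbound {m n : ℕ} (hn : n ≤ m) : 3 * (b * Λ ^ (4 * m) * 2 ^ n) ≤ K ^ (m + 1) :=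
    three_mul_mul_pow_mul_two_pow_le b hΛ hn
  have hK1 : 1 ≤ K := Nat.succ_le_of_lt (by rw [hK]; positivity)
  refine ⟨K, hK1, fun m => ⟨fun g hg => ?_, fun g g' hg hg' hgg' d => ?_⟩⟩
  · obtain ⟨w, rfl, hw⟩ := exists_mk_eq_length_eq_freeNorm g
    rw [← hw] at hg
    exact (Canonical.conjCommute_of_suffixes hf (hsuff hg)).mono (hbound hg)
  · obtain ⟨w, rfl, hw⟩ := exists_mk_eq_length_eq_freeNorm g
    obtain ⟨w', rfl, hw'⟩ := exists_mk_eq_length_eq_freeNorm g'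
    rw [← hw] at hg
    rw [← hw'] at hg'
    obtain ⟨t, ht, hvec, -, harea⟩ := Canonical.exists_areaEq (R := R) hf _ w (hsuff hg)
    obtain ⟨t', ht', hvec', -, harea'⟩ := Canonical.exists_areaEq (R := R) hf _ w' (hsuff hg')
    have := hbound hg
    have := hbound hg'
    obtain rfl := ht.eq_of_expVec_eq hf ht' (by rw [hvec, hvec', hgg'])
    exact ((harea d).trans (harea' d).symm).mono (by omega)

end ExponentialConjCommute

theorem exists_finset_basis {α : Type*} {r : α → α → Prop} (hr : WellQuasiOrdered r) (T : Set α) :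
    ∃ F : Finset α, (∀ x ∈ F, x ∈ T) ∧ ∀ t ∈ T, ∃ s ∈ F, r s t := by
  by_contra! h
  obtain ⟨f, -, hf⟩ := exists_seq_of_forall_finset_exists (· ∈ T) (fun x y => ¬ r x y) h
  obtain ⟨m, n, hmn, hrmn⟩ := hr f
  exact hf m n hmn hrmn

section Weight

variable {J : Type*} {key : J → ℕ} {κ : ℕ}

/-- The size of an integral formal sum in which the index `j` counts `key j ^ κ` times. It measures
the progress of the reduction of formal sums by leading terms. -/
noncomputable def weight (key : J → ℕ) (κ : ℕ) (x : J →₀ ℤ) : ℕ :=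
  x.sum fun j c => c.natAbs * key j ^ κ

theorem weight_zero : weight key κ 0 = 0 := Finsupp.sum_zero_index

theorem weight_single (j : J) (c : ℤ) :
    weight key κ (Finsupp.single j c) = c.natAbs * key j ^ κ :=
  Finsupp.sum_single_index (by simp)

theorem weight_eq_sum {x : J →₀ ℤ} {s : Finset J} (hs : x.support ⊆ s) :
    weight key κ x = ∑ j ∈ s, (x j).natAbs * key j ^ κ :=
  Finsupp.sum_of_support_subset x hs _ (by simp)

theorem weight_neg (x : J →₀ ℤ) : weight key κ (-x) = weight key κ x := by
  rw [weight_eq_sum (Finsupp.support_neg x).subset, weight_eq_sum subset_rfl]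
  simp

theorem weight_add_le (x y : J →₀ ℤ) :
    weight key κ (x + y) ≤ weight key κ x + weight key κ y := by
  classical
  rw [weight_eq_sum Finsupp.support_add, weight_eq_sum Finset.subset_union_left,
    weight_eq_sum Finset.subset_union_right, ← Finset.sum_add_distrib]
  gcongr with j
  rw [← add_mul]
  gcongr
  exact Int.natAbs_add_le _ _

theorem weight_eq_add_erase (x : J →₀ ℤ) (j : J) :
    weight key κ x = (x j).natAbs * key j ^ κ + weight key κ (x.erase j) :=
  (Finsupp.add_sum_erase' x j _ (by simp)).symm

theorem weight_mapDomain {sh : J → J} {k : ℕ} (hsh : Injective sh)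
    (hkey : ∀ j, key (sh j) = k * key j) (x : J →₀ ℤ) :
    weight key κ (x.mapDomain sh) = k ^ κ * weight key κ x := by
  rw [weight, Finsupp.sum_mapDomain_index_inj hsh, weight, Finsupp.mul_sum]
  simp only [hkey, mul_pow]
  exact Finsupp.sum_congr fun j _ => by ring

theorem weight_sub_lt {x y : J →₀ ℤ} {j : J} (hy : 0 < y j) (hyx : y j ≤ x j)
    (h : weight key κ (y.erase j) < key j ^ κ) : weight key κ (x - y) < weight key κ x := by
  obtain ⟨c, hc⟩ : ∃ c, (x j).natAbs = c + 1 := ⟨(x j).natAbs - 1, by omega⟩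
  have hxy : ((x - y) j).natAbs ≤ c := by
    rw [Finsupp.sub_apply]
    omega
  calc weight key κ (x - y)
      ≤ c * key j ^ κ + (weight key κ (x.erase j) + weight key κ (y.erase j)) := by
        rw [weight_eq_add_erase _ j, Finsupp.erase_sub, sub_eq_add_neg (x.erase j),
          ← weight_neg (y.erase j)]
        gcongr
        exact weight_add_le _ _
    _ < (c + 1) * key j ^ κ + weight key κ (x.erase j) := by linarith
    _ = weight key κ x := by rw [weight_eq_add_erase x j, hc]

theorem eventually_weight_lt {j : J} {x : J →₀ ℤ} (hj : 0 < key j)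
    (h : ∀ i ∈ x.support, key i < key j) :
    ∀ᶠ κ in Filter.atTop, weight key κ x < key j ^ κ := by
  have hj' : (0 : ℝ) < key j := mod_cast hj
  have hlim : Filter.Tendsto (fun κ : ℕ => ∑ i ∈ x.support,
      ((x i).natAbs : ℝ) * ((key i : ℝ) / key j) ^ κ) Filter.atTop (nhds 0) := by
    rw [← Finset.sum_const_zero (s := x.support)]
    refine tendsto_finsetSum _ fun i hi => ?_
    have hij : (key i : ℝ) / key j < 1 := by
      rw [div_lt_one hj']
      exact_mod_cast h i hi
    simpa using (tendsto_pow_atTop_nhds_zero_of_lt_one (by positivity) hij).const_mul _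
  filter_upwards [hlim.eventually_lt_const one_pos] with κ hκ
  simp only [div_pow, ← mul_div_assoc, ← Finset.sum_div] at hκ
  rw [div_lt_one (by positivity)] at hκ
  rw [weight_eq_sum subset_rfl]
  exact_mod_cast hκ


variable {M : Type*} {sh : M → J → J} {scale : M → ℕ}

/-- Shifts of an index set which are multiplicative for an injective numbering `key` and for which
divisibility is a well-quasi-order. They play the role of monomials in a Gröbner basis argument,
with `key` as the monomial order. -/
structure IsShiftSystem (sh : M → J → J) (key : J → ℕ) (scale : M → ℕ) : Prop where
  injective : Injective key
  pos : ∀ j, 0 < key j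
  key_shift : ∀ b j, key (sh b j) = scale b * key j
  wqo : WellQuasiOrdered fun i j => ∃ b, sh b i = j

/-- The leading index of a formal sum is the index of largest key in its support. -/
def IsLeading (key : J → ℕ) (x : J →₀ ℤ) (j : J) : Prop :=
  j ∈ x.support ∧ ∀ i ∈ x.support, key i ≤ key j

theorem exists_isLeading {x : J →₀ ℤ} (hx : x ≠ 0) : ∃ j, IsLeading key x j :=
  Finset.exists_max_image _ _ (Finsupp.support_nonempty_iff.2 hx)

theorem IsLeading.neg {x : J →₀ ℤ} {j : J} (h : IsLeading key x j) : IsLeading key (-x) j := by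
  rwa [IsLeading, Finsupp.support_neg]

theorem erase_mapDomain {f : J → J} (hf : Injective f) (x : J →₀ ℤ) (i : J) :
    (x.mapDomain f).erase (f i) = (x.erase i).mapDomain f := by
  have hi : f i ∉ ((x.erase i).mapDomain f).support := by
    rw [Finsupp.notMem_support_iff, Finsupp.mapDomain_apply hf, Finsupp.erase_same]
  conv_lhs => rw [← Finsupp.erase_add_single i x]
  rw [Finsupp.mapDomain_add, Finsupp.mapDomain_single, Finsupp.erase_add, Finsupp.erase_single,
    add_zero, Finsupp.erase_of_notMem_support hi]

namespace IsShiftSystem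

variable {x g : J →₀ ℤ} {i j : J} {b : M}

theorem scale_pos (h : IsShiftSystem sh key scale) (b : M) (j : J) : 0 < scale b :=
  Nat.pos_of_mul_pos_right (h.key_shift b j ▸ h.pos (sh b j))

theorem shift_injective (h : IsShiftSystem sh key scale) (b : M) : Injective (sh b) := by
  intro i j hij
  have hkey := congrArg key hij
  rw [h.key_shift, h.key_shift] at hkey
  exact h.injective (Nat.eq_of_mul_eq_mul_left (h.scale_pos b i) hkey)

theorem scale_le (h : IsShiftSystem sh key scale) (b : M) (j : J) : scale b ≤ key (sh b j) := by
  rw [h.key_shift]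
  exact Nat.le_mul_of_pos_right _ (h.pos j)

theorem key_le_of_mem_support_mapDomain (h : IsShiftSystem sh key scale) (hg : IsLeading key g i)
    (hj : j ∈ (g.mapDomain (sh b)).support) : key j ≤ key (sh b i) := by
  classical
  obtain ⟨k, hk, rfl⟩ := Finset.mem_image.1 (Finsupp.mapDomain_support hj)
  rw [h.key_shift, h.key_shift]
  exact Nat.mul_le_mul_left _ (hg.2 k hk)

theorem eventually_weight_erase_lt (h : IsShiftSystem sh key scale) (hg : IsLeading key g i) :
    ∀ᶠ κ in Filter.atTop, weight key κ (g.erase i) < key i ^ κ := by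
  classical
  refine eventually_weight_lt (h.pos i) fun k hk => ?_
  rw [Finsupp.support_erase, Finset.mem_erase] at hk
  exact (hg.2 k hk.2).lt_of_ne (h.injective.ne hk.1)

theorem weight_sub_mapDomain_lt (h : IsShiftSystem sh key scale)
    (hg : weight key κ (g.erase i) < key i ^ κ) (hgi : 0 < g i) (hgx : g i ≤ x (sh b i)) :
    weight key κ (x - g.mapDomain (sh b)) < weight key κ x := by
  have hsh := h.shift_injective b
  have hval : g.mapDomain (sh b) (sh b i) = g i := Finsupp.mapDomain_apply hsh _ _
  refine weight_sub_lt (j := sh b i) (hval ▸ hgi) (hval ▸ hgx) ?_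
  rw [erase_mapDomain hsh, weight_mapDomain hsh (h.key_shift b), h.key_shift, mul_pow]
  exact Nat.mul_lt_mul_of_pos_left hg (pow_pos (h.scale_pos b i) κ)

theorem exists_finset_leading (h : IsShiftSystem sh key scale) (I : Set (J →₀ ℤ)) :
    ∃ F : Finset (J × (J →₀ ℤ)), (∀ p ∈ F, p.2 ∈ I ∧ IsLeading key p.2 p.1 ∧ 0 < p.2 p.1) ∧
      ∀ x ∈ I, ∀ j, IsLeading key x j → 0 < x j →
        ∃ p ∈ F, ∃ b, sh b p.1 = j ∧ p.2 p.1 ≤ x j := by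
  have hwqo : WellQuasiOrdered fun p q : J × (J →₀ ℤ) =>
      (p.2 p.1).toNat ≤ (q.2 q.1).toNat ∧ ∃ b, sh b p.1 = q.1 := fun f =>
    ((wellQuasiOrdered_le (α := ℕ)).prod h.wqo) fun n => (((f n).2 (f n).1).toNat, (f n).1)
  obtain ⟨F, hF, hbasis⟩ := exists_finset_basis hwqo
    {p | p.2 ∈ I ∧ IsLeading key p.2 p.1 ∧ 0 < p.2 p.1}
  refine ⟨F, hF, fun x hx j hj hpos => ?_⟩
  obtain ⟨p, hp, hle, b, hb⟩ := hbasis (j, x) ⟨hx, hj, hpos⟩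
  refine ⟨p, hp, b, hb, ?_⟩
  dsimp only at hle
  omega

theorem exists_finite_reducers_of_pos (h : IsShiftSystem sh key scale) (I : AddSubgroup (J →₀ ℤ)) :
    ∃ G : Set (J →₀ ℤ), G.Finite ∧ G ⊆ I ∧ ∃ κ, ∀ x ∈ I, ∀ j, IsLeading key x j → 0 < x j →
      ∃ g ∈ G, ∃ b, weight key κ (x - g.mapDomain (sh b)) < weight key κ x ∧ scale b ≤ key j ∧
        ∀ i ∈ (g.mapDomain (sh b)).support, key i ≤ key j := by
  obtain ⟨F, hF, hlead⟩ := h.exists_finset_leading I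
  obtain ⟨κ, hκ⟩ := ((Filter.eventually_all_finset F).2 fun p hp =>
    h.eventually_weight_erase_lt (hF p hp).2.1).exists
  refine ⟨Prod.snd '' (F : Set (J × (J →₀ ℤ))), F.finite_toSet.image _,
    Set.image_subset_iff.2 fun p hp => (hF p hp).1, κ, fun x hx j hj hxj => ?_⟩
  obtain ⟨p, hp, b, rfl, hle⟩ := hlead x hx j hj hxj
  exact ⟨p.2, Set.mem_image_of_mem _ hp, b, h.weight_sub_mapDomain_lt (hκ p hp) (hF p hp).2.2 hle,
    h.scale_le b p.1, fun i => h.key_le_of_mem_support_mapDomain (hF p hp).2.1⟩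

theorem exists_finite_reducers (h : IsShiftSystem sh key scale) (I : AddSubgroup (J →₀ ℤ)) :
    ∃ G : Set (J →₀ ℤ), G.Finite ∧ G ⊆ I ∧ ∃ κ, ∀ x ∈ I, x ≠ 0 → ∃ g ∈ G, ∃ b,
      weight key κ (x - g.mapDomain (sh b)) < weight key κ x ∧
      ∀ k, (∀ j ∈ x.support, key j ≤ k) →
        scale b ≤ k ∧ ∀ j ∈ (x - g.mapDomain (sh b)).support, key j ≤ k := by
  classical
  obtain ⟨G, hG, hGI, κ, hred⟩ := h.exists_finite_reducers_of_pos I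
  have hbound {x y : J →₀ ℤ} {j : J} {k : ℕ} (hj : IsLeading key x j)
      (hy : ∀ i ∈ y.support, key i ≤ key j) (hk : ∀ i ∈ x.support, key i ≤ k) :
      ∀ i ∈ (x - y).support, key i ≤ k := fun i hi =>
    (Finset.mem_union.1 (Finsupp.support_sub hi)).elim (hk i) fun h => (hy i h).trans (hk j hj.1)
  refine ⟨G ∪ -G, hG.union hG.neg, Set.union_subset hGI fun g hg => neg_mem_iff.1 (hGI hg), κ,
    fun x hx hx0 => ?_⟩
  obtain ⟨j, hj⟩ := exists_isLeading (key := key) hx0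
  rcases (Finsupp.mem_support_iff.1 hj.1).lt_or_gt with hxj | hxj
  · obtain ⟨g, hg, b, hlt, hb, hgj⟩ := hred (-x) (neg_mem hx) j hj.neg (by simpa using hxj)
    have hneg : (-g).mapDomain (sh b) = -g.mapDomain (sh b) :=
      map_neg (Finsupp.mapDomain.addMonoidHom (sh b)) g
    refine ⟨-g, .inr (by simpa using hg), b, ?_, fun k hk => ⟨hb.trans (hk j hj.1), ?_⟩⟩
    · rwa [hneg, ← weight_neg, neg_sub, ← neg_add', add_comm, neg_add', ← weight_neg x]
    · rw [hneg]
      exact hbound hj (by rwa [Finsupp.support_neg]) hk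
  · obtain ⟨g, hg, b, hlt, hb, hgj⟩ := hred x hx j hj hxj
    exact ⟨g, .inl hg, b, hlt, fun k hk => ⟨hb.trans (hk j hj.1), hbound hj hgj hk⟩⟩

end IsShiftSystem

end Weight

section FormalSum

open FreeGroup (mk)

variable {T J : Type*} {cl : T → J}

/-- The formal sum of the classes `cl t` of the letters `t` of a word, counted with signs. -/
noncomputable def formalSum (cl : T → J) (w : FreeGroup T) : J →₀ ℤ :=
  (FreeGroup.lift (fun t => Multiplicative.ofAdd (Finsupp.single (cl t) (1 : ℤ))) w).toAdd

theorem formalSum_one : formalSum cl 1 = 0 := by simp [formalSum]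

theorem formalSum_mul (w w' : FreeGroup T) :
    formalSum cl (w * w') = formalSum cl w + formalSum cl w' := by simp [formalSum]

theorem formalSum_inv (w : FreeGroup T) : formalSum cl w⁻¹ = -formalSum cl w := by
  simp [formalSum]

theorem formalSum_of (t : T) : formalSum cl (FreeGroup.of t) = Finsupp.single (cl t) 1 := by
  simp [formalSum]

theorem formalSum_letter (a : T × Bool) :
    formalSum cl (letter a) = Finsupp.single (cl a.1) (if a.2 then 1 else -1) := by
  obtain ⟨t, _ | _⟩ := a <;> simp [letter_true, letter_false, formalSum_inv, formalSum_of]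

theorem formalSum_map {σ : T → T} {sh : J → J} (h : ∀ t, cl (σ t) = sh (cl t))
    (w : FreeGroup T) : formalSum cl (FreeGroup.map σ w) = (formalSum cl w).mapDomain sh := by
  induction w using FreeGroup.induction_on with
  | C1 => simp [formalSum_one]
  | of t => simp [formalSum_of, h]
  | inv_of t ih =>
    rw [map_inv, formalSum_inv, ih, formalSum_inv]
    exact (map_neg (Finsupp.mapDomain.addMonoidHom sh : (J →₀ ℤ) →+ _) _).symm
  | mul w w' hw hw' => rw [map_mul, formalSum_mul, hw, hw', formalSum_mul, Finsupp.mapDomain_add]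

theorem coe_formalSum_id (w : FreeGroup T) : ⇑(formalSum id w) = expVec w := by
  classical
  induction w using letter_induction with
  | one => rw [formalSum_one, expVec_one, Finsupp.coe_zero]
  | letter_mul a w ih =>
    rw [formalSum_mul, expVec_mul, Finsupp.coe_add, ih, formalSum_letter, expVec_letter,
      Finsupp.single_eq_pi_single, id]

theorem formalSum_mk_cons (a : T × Bool) (L : List (T × Bool)) :
    formalSum cl (mk (a :: L)) =
      Finsupp.single (cl a.1) (if a.2 then 1 else -1) + formalSum cl (mk L) := by
  rw [mk_cons_eq, formalSum_mul, formalSum_letter]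

theorem exists_mem_of_sign_formalSum_mk {j : J} {s : Bool} {L : List (T × Bool)}
    (h : if s then formalSum cl (mk L) j < 0 else 0 < formalSum cl (mk L) j) :
    ∃ a ∈ L, cl a.1 = j ∧ a.2 = !s := by
  classical
  induction L with
  | nil => simp [← FreeGroup.one_eq_mk, formalSum_one] at h
  | cons a L ih =>
    rw [formalSum_mk_cons] at h
    by_cases ha : cl a.1 = j ∧ a.2 = !s
    · exact ⟨a, List.mem_cons_self, ha⟩
    · obtain ⟨a', ha', h'⟩ := ih (by
        rw [Finsupp.add_apply, Finsupp.single_apply] at h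
        grind)
      exact ⟨a', List.mem_cons_of_mem _ ha', h'⟩

theorem exists_cancelling_letter {a : T × Bool} {L : List (T × Bool)}
    (h : formalSum cl (mk (a :: L)) = 0) : ∃ A a' A', L = A ++ a' :: A' ∧ cl a'.1 = cl a.1 ∧
      a'.2 = (!a.2) ∧ formalSum cl (mk (A ++ A')) = 0 := by
  rw [formalSum_mk_cons] at h
  obtain ⟨a', ha', hcl, hsign⟩ : ∃ a' ∈ L, cl a'.1 = cl a.1 ∧ a'.2 = !a.2 := by
    refine exists_mem_of_sign_formalSum_mk ?_
    have := DFunLike.congr_fun h (cl a.1)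
    rw [Finsupp.add_apply, Finsupp.single_eq_same, Finsupp.zero_apply] at this
    split_ifs at this ⊢ <;> omega
  obtain ⟨A, A', rfl⟩ := List.append_of_mem ha'
  refine ⟨A, a', A', rfl, hcl, hsign, ?_⟩
  have hcancel : Finsupp.single (cl a.1) (if a.2 then 1 else -1 : ℤ) +
      Finsupp.single (cl a'.1) (if a'.2 then 1 else -1) = 0 := by
    rw [hcl, hsign, ← Finsupp.single_add]
    cases a.2 <;> simp
  rw [← FreeGroup.mul_mk, formalSum_mul] at h ⊢
  rw [formalSum_mk_cons] at h
  rw [← h, add_left_comm _ (formalSum cl (mk A)),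
    ← add_assoc (Finsupp.single _ _), hcancel, zero_add]

theorem weight_formalSum_mk_le {key : J → ℕ} {k : ℕ} (κ : ℕ) {L : List (T × Bool)}
    (h : ∀ a ∈ L, key (cl a.1) ≤ k) : weight key κ (formalSum cl (mk L)) ≤ L.length * k ^ κ := by
  induction L with
  | nil => simp [← FreeGroup.one_eq_mk, formalSum_one, weight_zero]
  | cons a L ih =>
    obtain ⟨ha, hL⟩ := List.forall_mem_cons.1 h
    rw [formalSum_mk_cons, List.length_cons, add_mul, one_mul, add_comm (_ * _)]
    refine (weight_add_le _ _).trans (Nat.add_le_add ?_ (ih hL))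
    rw [weight_single]
    split_ifs <;> simpa using Nat.pow_le_pow_left ha κ

theorem key_le_of_mem_support_formalSum {key : J → ℕ} {k : ℕ} {L : List (T × Bool)}
    (h : ∀ a ∈ L, key (cl a.1) ≤ k) : ∀ j ∈ (formalSum cl (mk L)).support, key j ≤ k := by
  classical
  induction L with
  | nil => simp [← FreeGroup.one_eq_mk, formalSum_one]
  | cons a L ih =>
    obtain ⟨ha, hL⟩ := List.forall_mem_cons.1 h
    intro j hj
    rw [formalSum_mk_cons] at hj
    rcases Finset.mem_union.1 (Finsupp.support_add hj) with hj | hj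
    · rw [Finset.mem_singleton.1 (Finsupp.support_single_subset hj)]
      exact ha
    · exact ih hL j hj

end FormalSum

section ZeroSum

open FreeGroup (mk lift)

variable {G T J : Type*} [Group G] {R : Set G} {τ : T → G} {cl : T → J} {c : ℕ}

theorem AreaCommute.inv_left {a b : G} {N : ℕ} (h : AreaCommute R a b N) :
    AreaCommute R a⁻¹ b N := by
  simpa [AreaCommute, mul_assoc] using (AreaEq.symm h).mul_left a⁻¹ |>.mul_right a⁻¹

theorem AreaCommute.lift_letter {a a' : T × Bool} (h : AreaCommute R (τ a.1) (τ a'.1) c) :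
    AreaCommute R (lift τ (letter a)) (lift τ (letter a')) c := by
  obtain ⟨t, s⟩ := a
  obtain ⟨t', s'⟩ := a'
  cases s <;> cases s' <;>
    simp only [letter_true, letter_false, map_inv, FreeGroup.lift_apply_of]
  exacts [h.inv_left.symm.inv_left.symm, h.inv_left, h.symm.inv_left.symm, h]

theorem AreaCommute.lift_mk {b : G} {L : List (T × Bool)}
    (h : ∀ a ∈ L, AreaCommute R b (lift τ (letter a)) c) :
    AreaCommute R b (lift τ (mk L)) (L.length * c) := by
  have hL : lift τ (mk L) = (L.map fun a => lift τ (letter a)).prod := by simp [letter]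
  rw [hL, ← L.length_map (f := fun a => lift τ (letter a))]
  exact AreaCommute.list_prod (List.forall_mem_map.2 h)

theorem AreaEq.areaLe_lift_letter_mul {a a' : T × Bool} (h : AreaEq R (τ a.1) (τ a'.1) c)
    (hsign : a'.2 = !a.2) : AreaLe R (lift τ (letter a) * lift τ (letter a')) c := by
  obtain ⟨t, s⟩ := a
  obtain ⟨t', _⟩ := a'
  subst hsign
  rw [letter_not, map_inv]
  change AreaEq R (lift τ (letter (t, s))) (lift τ (letter (t', s))) c
  cases s
  · simpa only [letter_false, map_inv, FreeGroup.lift_apply_of] using h.inv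
  · simpa only [letter_true, FreeGroup.lift_apply_of] using h

theorem areaLe_lift_mk_of_formalSum_eq_zero {L : List (T × Bool)}
    (hcomm : ∀ a ∈ L, ∀ a' ∈ L, AreaCommute R (τ a.1) (τ a'.1) c)
    (heq : ∀ a ∈ L, ∀ a' ∈ L, cl a.1 = cl a'.1 → AreaEq R (τ a.1) (τ a'.1) c)
    (h0 : formalSum cl (mk L) = 0) : AreaLe R (lift τ (mk L)) (L.length ^ 2 * c) := by
  induction hn : L.length using Nat.strong_induction_on generalizing L with | _ n ih
  subst hn
  obtain _ | ⟨a, L⟩ := L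
  · simpa [← FreeGroup.one_eq_mk] using AreaLe.one _
  obtain ⟨A, a', A', rfl, hcl, hsign, h0'⟩ := exists_cancelling_letter h0
  have hsub : A ++ A' ⊆ a :: (A ++ a' :: A') := by grind
  have hmem : a' ∈ a :: (A ++ a' :: A') := by simp
  have hrest := ih (A ++ A').length (by simp)
    (fun b hb b' hb' => hcomm b (hsub hb) b' (hsub hb'))
    (fun b hb b' hb' => heq b (hsub hb) b' (hsub hb')) h0' rfl
  have hpair := (heq a List.mem_cons_self a' hmem hcl.symm).areaLe_lift_letter_mul hsign
  have hswap : AreaCommute R (lift τ (letter a')) (lift τ (mk A)) (A.length * c) :=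
    .lift_mk fun b hb => (hcomm a' hmem b (by simp [hb])).lift_letter
  have hmove : AreaEq R (lift τ (mk (a :: (A ++ a' :: A'))))
      (lift τ (letter a) * lift τ (letter a') * lift τ (mk (A ++ A'))) (A.length * c) := by
    simpa [mk_cons_eq, ← FreeGroup.mul_mk, mul_assoc] using
      ((AreaEq.symm hswap).mul_right (lift τ (mk A'))).mul_left (lift τ (letter a))
  refine (hmove.areaLe (hpair.mul hrest)).mono ?_
  simp only [List.length_cons, List.length_append]
  nlinarith [Nat.zero_le (c * (A.length + A'.length))]

theorem areaLe_lift_mk_of_formalSum_eq {L L' : List (T × Bool)} {N : ℕ}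
    (hcomm : ∀ a ∈ L ++ L', ∀ a' ∈ L ++ L', AreaCommute R (τ a.1) (τ a'.1) c)
    (heq : ∀ a ∈ L ++ L', ∀ a' ∈ L ++ L', cl a.1 = cl a'.1 → AreaEq R (τ a.1) (τ a'.1) c)
    (h : formalSum cl (mk L') = formalSum cl (mk L)) (hL' : AreaLe R (lift τ (mk L')) N) :
    AreaLe R (lift τ (mk L)) ((L.length + L'.length) ^ 2 * c + N) := by
  have hmem {a : T × Bool} (ha : a ∈ L ++ FreeGroup.invRev L') : ∃ b ∈ L ++ L', b.1 = a.1 := by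
    rcases List.mem_append.1 ha with ha | ha
    · exact ⟨a, List.mem_append_left _ ha, rfl⟩
    · obtain ⟨b, hb, rfl⟩ := List.mem_map.1 (List.mem_reverse.1 ha)
      exact ⟨b, List.mem_append_right _ hb, rfl⟩
  have hdiff : mk (L ++ FreeGroup.invRev L') = mk L * (mk L')⁻¹ := by
    rw [← FreeGroup.mul_mk, FreeGroup.inv_mk]
  have harea : AreaLe R (lift τ (mk (L ++ FreeGroup.invRev L')))
      ((L ++ FreeGroup.invRev L').length ^ 2 * c) := by
    refine areaLe_lift_mk_of_formalSum_eq_zero (cl := cl) (fun a ha a' ha' => ?_)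
      (fun a ha a' ha' => ?_) ?_
    · obtain ⟨⟨b, hb, hba⟩, b', hb', hba'⟩ := And.intro (hmem ha) (hmem ha')
      exact hba ▸ hba' ▸ hcomm b hb b' hb'
    · obtain ⟨⟨b, hb, hba⟩, b', hb', hba'⟩ := And.intro (hmem ha) (hmem ha')
      exact hba ▸ hba' ▸ heq b hb b' hb'
    · rw [hdiff, formalSum_mul, formalSum_inv, h, add_neg_cancel]
  rw [hdiff, map_mul, map_inv, List.length_append, FreeGroup.invRev_length] at harea
  exact AreaEq.areaLe harea hL'

end ZeroSum

section Representatives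

open FreeGroup (mk lift)

variable {G T J M : Type*} [Group G] {τ : T → G} {cl : T → J}

/-- The formal sums of the words in the elements `τ t` that are trivial modulo `R`. -/
def relationSums {G T J : Type*} [Group G] (R : Set G) (τ : T → G) (cl : T → J) :
    AddSubgroup (J →₀ ℤ) where
  carrier := formalSum cl '' ((Subgroup.normalClosure R).comap (lift τ))
  zero_mem' := ⟨1, one_mem _, formalSum_one⟩
  add_mem' := by
    rintro _ _ ⟨w, hw, rfl⟩ ⟨w', hw', rfl⟩
    exact ⟨w * w', mul_mem hw hw', formalSum_mul w w'⟩
  neg_mem' := by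
    rintro _ ⟨w, hw, rfl⟩
    exact ⟨w⁻¹, inv_mem hw, formalSum_inv w⟩

variable {R : Set G}

theorem lift_map_eq_conj {σ : T → T} {g : G} (h : ∀ t, τ (σ t) = MulAut.conj g (τ t))
    (w : FreeGroup T) : lift τ (FreeGroup.map σ w) = MulAut.conj g (lift τ w) := by
  induction w using FreeGroup.induction_on with
  | C1 => simp only [map_one]
  | of t => simpa using h t
  | inv_of t ih => simp only [map_inv, ih]
  | mul w w' hw hw' => simp only [map_mul, hw, hw']

theorem mapDomain_mem_relationSums {σ : T → T} {sh : J → J} {g : G} {x : J →₀ ℤ}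
    (hσ : ∀ t, cl (σ t) = sh (cl t)) (hτ : ∀ t, τ (σ t) = MulAut.conj g (τ t))
    (hx : x ∈ relationSums R τ cl) : x.mapDomain sh ∈ relationSums R τ cl := by
  obtain ⟨w, hw, rfl⟩ := hx
  refine ⟨FreeGroup.map σ w, ?_, formalSum_map hσ w⟩
  rw [Subgroup.coe_comap, Set.mem_preimage, lift_map_eq_conj hτ]
  exact Subgroup.normalClosure_normal.conj_mem _ hw g

theorem exists_uniform_representatives {Γ : Set (J →₀ ℤ)} (hΓ : Γ.Finite)
    (h : Γ ⊆ relationSums R τ cl) : ∃ ℓ, ∃ F : Set T, F.Finite ∧ ∀ x ∈ Γ, ∃ L : List (T × Bool),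
      formalSum cl (mk L) = x ∧ L.length ≤ ℓ ∧ AreaLe R (lift τ (mk L)) ℓ ∧ ∀ a ∈ L, a.1 ∈ F := by
  induction Γ, hΓ using Set.Finite.induction_on with
  | empty => exact ⟨0, ∅, Set.finite_empty, by simp⟩
  | @insert x Γ _ _ ih =>
    obtain ⟨ℓ, F, hF, hΓ⟩ := ih fun y hy => h (Set.mem_insert_of_mem x hy)
    obtain ⟨w, hw, hwx⟩ := h (Set.mem_insert x Γ)
    obtain ⟨L, rfl, -⟩ := exists_mk_eq_length_eq_freeNorm w
    obtain ⟨N, hN⟩ := AreaLe.exists_of_mem_normalClosure hw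
    refine ⟨ℓ + L.length + N, F ∪ Prod.fst '' {a | a ∈ L},
      hF.union (L.finite_toSet.image _), ?_⟩
    rintro y (rfl | hy)
    · exact ⟨L, hwx, by omega, hN.mono (by omega), fun a ha => .inr ⟨a, ha, rfl⟩⟩
    · obtain ⟨L', hL'y, hlen, harea, hF'⟩ := hΓ y hy
      exact ⟨L', hL'y, by omega, harea.mono (by omega), fun a ha => .inl (hF' a ha)⟩

theorem exists_short_representatives {sh : M → J → J} {key : J → ℕ} {scale : M → ℕ}
    (h : IsShiftSystem sh key scale) {σ : M → T → T} (hσ : ∀ b t, cl (σ b t) = sh b (cl t))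
    (hτ : ∀ b, ∃ g, ∀ t, τ (σ b t) = MulAut.conj g (τ t)) :
    ∃ ℓ κ, ∃ F : Set T, F.Finite ∧ ∀ x ∈ relationSums R τ cl, ∀ k, (∀ j ∈ x.support, key j ≤ k) →
      ∃ L : List (T × Bool), formalSum cl (mk L) = x ∧ L.length ≤ weight key κ x * ℓ ∧
        AreaLe R (lift τ (mk L)) (weight key κ x * ℓ) ∧
        ∀ a ∈ L, ∃ b, scale b ≤ k ∧ ∃ t ∈ F, a.1 = σ b t := by
  obtain ⟨Γ, hΓ, hΓI, κ, hred⟩ := h.exists_finite_reducers (relationSums R τ cl)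
  obtain ⟨ℓ, F, hF, hrep⟩ := exists_uniform_representatives hΓ hΓI
  refine ⟨ℓ, κ, F, hF, fun x hx k hk => ?_⟩
  induction hn : weight key κ x using Nat.strong_induction_on generalizing x with | _ n ih
  subst hn
  rcases eq_or_ne x 0 with rfl | hx0
  · exact ⟨[], by simp [← FreeGroup.one_eq_mk, formalSum_one],
      by simp, by simpa [← FreeGroup.one_eq_mk] using AreaLe.one _, by simp⟩
  obtain ⟨y, hy, b, hlt, hbk⟩ := hred x hx hx0
  obtain ⟨hb, hk'⟩ := hbk k hk
  obtain ⟨L, rfl, hlen, harea, hLF⟩ := hrep y hy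
  obtain ⟨g, hg⟩ := hτ b
  obtain ⟨L', hL'x, hlen', harea', hL'F⟩ :=
    ih _ hlt _ (sub_mem hx (mapDomain_mem_relationSums (hσ b) hg (hΓI hy))) hk' rfl
  have hmap : mk (L.map fun a => (σ b a.1, a.2)) = FreeGroup.map (σ b) (mk L) := rfl
  have hstep : (weight key κ (x - (formalSum cl (mk L)).mapDomain (sh b)) + 1) * ℓ ≤
      weight key κ x * ℓ := Nat.mul_le_mul_right ℓ hlt
  rw [add_mul, one_mul] at hstep
  refine ⟨(L.map fun a => (σ b a.1, a.2)) ++ L', ?_, ?_, ?_, fun a ha => ?_⟩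
  · rw [← FreeGroup.mul_mk, formalSum_mul, hmap, formalSum_map (hσ b), hL'x, add_sub_cancel]
  · rw [List.length_append, List.length_map]
    omega
  · rw [← FreeGroup.mul_mk, hmap, _root_.map_mul, lift_map_eq_conj hg]
    exact ((harea.conj g).mul harea').mono (by omega)
  · rcases List.mem_append.1 ha with ha | ha
    · obtain ⟨a, haL, rfl⟩ := List.mem_map.1 ha
      exact ⟨b, hb, a.1, hLF a haL, rfl⟩
    · exact hL'F a ha

end Representatives

section CommTerm

open FreeGroup (mk lift)
open scoped commutatorElement

variable {X : Type*}

/-- A conjugate of a commutator of letters, encoded by the conjugating word and the two letters. -/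
abbrev CommTerm (X : Type*) : Type _ := List (X × Bool) × (X × Bool) × (X × Bool)

namespace CommTerm

/-- The element of the free group encoded by a conjugate of a commutator of letters. -/
def val (t : CommTerm X) : FreeGroup X := MulAut.conj (mk t.1) (letterComm t.2)

/-- The class of a conjugate of a commutator of letters when the order of the letters of the
conjugating word is forgotten. -/
def cls (t : CommTerm X) : Multiset (X × Bool) × (X × Bool) × (X × Bool) := (t.1, t.2)

/-- The conjugate of a term by a further word. -/
def shift (L : List (X × Bool)) (t : CommTerm X) : CommTerm X := (L ++ t.1, t.2)

theorem val_shift (L : List (X × Bool)) (t : CommTerm X) :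
    (shift L t).val = MulAut.conj (mk L) t.val := by
  simp only [val, shift, ← FreeGroup.mul_mk, map_mul, MulAut.mul_apply]

theorem exists_word_commutator (a : X × Bool) (A : List (X × Bool)) :
    ∃ P : List (CommTerm X × Bool), lift val (mk P) = ⁅letter a, mk A⁆ ∧ P.length = A.length ∧
      ∀ p ∈ P, p.1.1.length ≤ A.length := by
  induction A with
  | nil => exact ⟨[], by simp [← FreeGroup.one_eq_mk], rfl, by simp⟩
  | cons b A ih =>
    obtain ⟨P, hP, hlen, hconj⟩ := ih
    have hmap : mk (P.map fun p => (shift [b] p.1, p.2)) = FreeGroup.map (shift [b]) (mk P) := rfl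
    refine ⟨(([], a, b), true) :: P.map fun p => (shift [b] p.1, p.2), ?_, by simp [hlen], ?_⟩
    · have hhead : lift val (letter ((([], a, b) : CommTerm X), true)) = ⁅letter a, letter b⁆ := by
        simp [letter_true, val, letterComm, ← FreeGroup.one_eq_mk]
      rw [mk_cons_eq, map_mul, hhead, hmap, lift_map_eq_conj (val_shift [b]), hP, ← letter,
        mk_cons_eq b A]
      simp only [commutatorElement_def, MulAut.conj_apply]
      group
    · simp only [List.mem_cons, List.mem_map]
      rintro _ (rfl | ⟨p, hp, rfl⟩)
      · exact Nat.zero_le _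
      · simpa [shift, add_comm] using hconj p hp

theorem exists_word_of_expVec_eq_zero {L : List (X × Bool)} (h : expVec (mk L) = 0) :
    ∃ P : List (CommTerm X × Bool), lift val (mk P) = mk L ∧ P.length ≤ L.length ^ 2 ∧
      ∀ p ∈ P, p.1.1.length ≤ L.length := by
  induction hn : L.length using Nat.strong_induction_on generalizing L with | _ n ih
  subst hn
  obtain _ | ⟨a, L⟩ := L
  · exact ⟨[], by simp [← FreeGroup.one_eq_mk], by simp, by simp⟩
  have h0 : formalSum id (mk (a :: L)) = 0 :=
    DFunLike.coe_injective (by rw [coe_formalSum_id, h]; rfl)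
  obtain ⟨A, a', A', rfl, hgen, hsign, h0'⟩ := exists_cancelling_letter h0
  obtain ⟨P, hP, hPlen, hPconj⟩ := exists_word_commutator a A
  obtain ⟨P', hP', hPlen', hPconj'⟩ := ih (A ++ A').length (by simp)
    (by rw [← coe_formalSum_id, h0']; rfl) rfl
  have ha' : letter a' = (letter a)⁻¹ := by
    rw [← letter_not, ← hsign, ← show a'.1 = a.1 from hgen]
  refine ⟨P ++ P', ?_, ?_, fun p hp => ?_⟩
  · rw [← FreeGroup.mul_mk, map_mul, hP, hP', mk_cons_eq, ← FreeGroup.mul_mk, ← FreeGroup.mul_mk,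
      mk_cons_eq, ha', commutatorElement_def]
    group
  · simp only [List.length_append, List.length_cons] at hPlen' ⊢
    have hsq : (A.length + (A'.length + 1) + 1) ^ 2 =
        (A.length + A'.length) ^ 2 + 4 * (A.length + A'.length) + 4 := by ring
    omega
  · simp only [List.length_append, List.length_cons] at hPconj' ⊢
    rcases List.mem_append.1 hp with hp | hp
    · have := hPconj p hp
      omega
    · have := hPconj' p hp
      omega

theorem expVec_mk_of_perm {L L' : List (X × Bool)} (h : L.Perm L') :
    expVec (mk L) = expVec (mk L') := by
  induction h with
  | nil => rfl
  | cons a _ ih => rw [expVec_mk_cons, ih, ← expVec_mk_cons]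
  | swap a b L => simp only [expVec_mk_cons, add_left_comm]
  | trans _ _ ih ih' => exact ih.trans ih'

theorem exists_areaCommute_areaEq_pow [Finite X] {R : Set (FreeGroup X)} (hR : R.Finite)
    (hmeta : IsMetabelian (FreeGroup X ⧸ Subgroup.normalClosure R)) :
    ∃ K, 1 ≤ K ∧ ∀ m, ∀ t t' : CommTerm X, t.1.length ≤ m → t'.1.length ≤ m →
      AreaCommute R t.val t'.val (K ^ (2 * m + 1)) ∧
      (t.cls = t'.cls → AreaEq R t.val t'.val (K ^ (2 * m + 1))) := by
  classical
  have := Fintype.ofFinite X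
  obtain ⟨K, hK, H⟩ := exists_conjCommute_pow hR hmeta
  refine ⟨K, hK, fun m t t' ht ht' => ⟨?_, fun htt' => ?_⟩⟩
  · have hconj : ConjCommute R ((mk t.1)⁻¹ * mk t'.1) (K ^ (2 * m + 1)) := by
      refine (H (2 * m)).1 _ ?_
      rw [FreeGroup.inv_mk, FreeGroup.mul_mk]
      refine (freeNorm_mk_le _).trans ?_
      rw [List.length_append, FreeGroup.invRev_length]
      omega
    simpa only [val, ← MulAut.mul_apply, ← map_mul, mul_inv_cancel_left] using
      (hconj t.2 t'.2).conj (mk t.1)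
  · obtain ⟨hperm, hpair⟩ := Prod.mk.inj htt'
    rw [val, val, ← hpair]
    exact (H (2 * m)).2 _ _ ((freeNorm_mk_le _).trans (by omega))
      ((freeNorm_mk_le _).trans (by omega))
      (expVec_mk_of_perm (Multiset.coe_eq_coe.1 hperm)) _

end CommTerm

end CommTerm

section PrimeKeys

variable {A E : Type*}

theorem prod_map_primes_injective {p : A → Nat.Primes} (hp : Injective p) :
    Injective fun s : Multiset A => (s.map fun a => (p a : ℕ)).prod := by
  intro s s' h
  have hprod (s : Multiset A) : (PrimeMultiset.prod (s.map p) : ℕ) =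
      (s.map fun a => (p a : ℕ)).prod :=
    (PrimeMultiset.coe_prod _).trans (congrArg Multiset.prod (Multiset.map_map _ _ _))
  have hmap : s.map p = s'.map p := by
    rw [← PrimeMultiset.factorMultiset_prod (s.map p),
      PNat.coe_injective ((hprod s).trans (h.trans (hprod s').symm))]
    exact PrimeMultiset.factorMultiset_prod _
  exact Multiset.map_injective hp hmap

theorem cons_inr_map_inl_injective : Injective fun j : Multiset A × E =>
    (Sum.inr j.2 : A ⊕ E) ::ₘ j.1.map Sum.inl := by
  rintro ⟨s, e⟩ ⟨s', e'⟩ h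
  obtain rfl : s = s' := by
    simpa [Multiset.filterMap_map, Multiset.filterMap_cons, Function.comp_def] using
      congrArg (Multiset.filterMap Sum.getLeft?) h
  exact Prod.ext rfl (Sum.inr_injective ((Multiset.cons_inj_left _).1 h))

theorem wellQuasiOrdered_multiset_add [Finite A] [Finite E] :
    WellQuasiOrdered fun i j : Multiset A × E => ∃ b, (b + i.1, i.2) = j := by
  classical
  have hle : WellQuasiOrderedLE (Multiset A) := ⟨fun f => by
    obtain ⟨m, n, hmn, h⟩ := wellQuasiOrdered_le fun i a => (f i).count a
    exact ⟨m, n, hmn, Multiset.le_iff_count.2 h⟩⟩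
  intro f
  obtain ⟨m, n, hmn, hle, heq⟩ :=
    (wellQuasiOrdered_le (α := Multiset A)).prod (Finite.wellQuasiOrdered (Eq (α := E))) f
  obtain ⟨b, hb⟩ := Multiset.le_iff_exists_add.1 hle
  exact ⟨m, n, hmn, b, Prod.ext (by rw [hb, add_comm]) heq⟩

theorem exists_isShiftSystem_multiset_add (A E : Type*) [Finite A] [Finite E] :
    ∃ (key : Multiset A × E → ℕ) (scale : Multiset A → ℕ) (Q : ℕ),
      IsShiftSystem (fun b j => (b + j.1, j.2)) key scale ∧ (∀ b, 2 ^ b.card ≤ scale b) ∧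
      ∀ j, key j ≤ Q ^ (j.1.card + 1) := by
  obtain ⟨n, ⟨f⟩⟩ := Finite.exists_equiv_fin (A ⊕ E)
  let p : A ⊕ E → Nat.Primes := fun a => Infinite.natEmbedding Nat.Primes (f a)
  have hp : Injective p := fun a a' h =>
    f.injective (Fin.val_injective ((Infinite.natEmbedding Nat.Primes).injective h))
  obtain ⟨Q, hQ⟩ := (Set.finite_range fun a => (p a : ℕ)).bddAbove
  let scale : Multiset A → ℕ := fun b => (b.map fun a => (p (.inl a) : ℕ)).prod
  let key : Multiset A × E → ℕ := fun j =>
    ((Sum.inr j.2 ::ₘ j.1.map Sum.inl).map fun a => (p a : ℕ)).prod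
  have hkey (j) : key j = p (.inr j.2) * scale j.1 := by
    simp [key, scale, Multiset.map_map]
  refine ⟨key, scale, Q, ⟨(prod_map_primes_injective hp).comp cons_inr_map_inl_injective, ?_, ?_,
    wellQuasiOrdered_multiset_add⟩, fun b => ?_, fun j => ?_⟩
  · intro j
    exact Nat.pos_of_ne_zero (Multiset.prod_ne_zero fun h0 =>
      let ⟨a, _, ha⟩ := Multiset.mem_map.1 h0
      (p a).2.ne_zero ha)
  · intro b j
    simp only [hkey, scale, Multiset.map_add, Multiset.prod_add]
    ring
  · simpa using Multiset.pow_card_le_prod (s := b.map fun a => (p (.inl a) : ℕ)) (a := 2)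
      (Multiset.forall_mem_map_iff.2 fun a _ => (p (.inl a)).2.two_le)
  · simpa [key] using Multiset.prod_le_pow_card
      ((Sum.inr j.2 ::ₘ j.1.map Sum.inl).map fun a => (p a : ℕ)) Q
      (Multiset.forall_mem_map_iff.2 fun a _ => hQ ⟨a, rfl⟩)

theorem isShiftSystem_of_finite {J : Type*} [Finite J] {key : J → ℕ} (hinj : Injective key)
    (hpos : ∀ j, 0 < key j) :
    IsShiftSystem (fun (_ : Unit) (j : J) => j) key fun _ => 1 where
  injective := hinj
  pos := hpos
  key_shift _ _ := (one_mul _).symm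
  wqo := by simpa using Finite.wellQuasiOrdered (Eq (α := J))

end PrimeKeys

section ExpBounded

/-- Functions of at most exponential growth; the exponent `m + 1` makes room for the value at
`0`. -/
def ExpBounded (h : ℕ → ℕ) : Prop := ∃ C, 1 ≤ C ∧ ∀ m, h m ≤ C ^ (m + 1)

namespace ExpBounded

variable {h h' : ℕ → ℕ}

theorem geom (C : ℕ) : ExpBounded fun m => C ^ (m + 1) :=
  ⟨C + 1, by omega, fun _ => Nat.pow_le_pow_left C.le_succ _⟩

theorem const (c : ℕ) : ExpBounded fun _ => c :=
  ⟨c + 1, by omega, fun m => c.le_succ.trans (Nat.le_self_pow m.succ_ne_zero _)⟩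

theorem id : ExpBounded fun m => m :=
  ⟨2, by omega, fun m => m.le_succ.trans Nat.lt_two_pow_self.le⟩

theorem mul (hh : ExpBounded h) (hh' : ExpBounded h') : ExpBounded fun m => h m * h' m := by
  obtain ⟨⟨C, hC, H⟩, C', hC', H'⟩ := And.intro hh hh'
  exact ⟨C * C', Nat.mul_pos hC hC', fun m =>
    (Nat.mul_le_mul (H m) (H' m)).trans_eq (mul_pow C C' _).symm⟩

theorem add (hh : ExpBounded h) (hh' : ExpBounded h') : ExpBounded fun m => h m + h' m := by
  obtain ⟨⟨C, hC, H⟩, C', -, H'⟩ := And.intro hh hh'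
  exact ⟨C + C', by omega, fun m =>
    (Nat.add_le_add (H m) (H' m)).trans (pow_add_pow_le C.zero_le C'.zero_le m.succ_ne_zero)⟩

theorem pow (hh : ExpBounded h) (k : ℕ) : ExpBounded fun m => h m ^ k := by
  obtain ⟨C, hC, H⟩ := hh
  exact ⟨C ^ k, Nat.one_le_pow _ _ hC, fun m =>
    (Nat.pow_le_pow_left (H m) k).trans_eq (pow_right_comm C _ k)⟩

end ExpBounded

end ExpBounded

section Filling

open FreeGroup (mk lift)

variable {X : Type*} [Finite X] {R : Set (FreeGroup X)}

theorem exists_short_commTerm_representatives (R : Set (FreeGroup X)) :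
    ∃ size, ExpBounded size ∧ ∃ B, ∀ m, ∀ P : List (CommTerm X × Bool),
      lift CommTerm.val (mk P) ∈ Subgroup.normalClosure R → (∀ p ∈ P, p.1.1.length ≤ m) →
      ∃ L : List (CommTerm X × Bool),
        formalSum CommTerm.cls (mk L) = formalSum CommTerm.cls (mk P) ∧
        L.length ≤ P.length * size m ∧
        AreaLe R (lift CommTerm.val (mk L)) (P.length * size m) ∧
        ∀ p ∈ L, p.1.1.length ≤ B * (m + 1) := by
  obtain ⟨key, scale, Q, hsys, hscale, hkey⟩ :=
    exists_isShiftSystem_multiset_add (X × Bool) ((X × Bool) × (X × Bool))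
  obtain ⟨ℓ, κ, F, hF, hrep⟩ := exists_short_representatives (R := R) (τ := CommTerm.val) hsys
    (σ := fun b => CommTerm.shift b.toList) (cl := CommTerm.cls)
    (fun b t => by simp [CommTerm.cls, CommTerm.shift, ← Multiset.coe_add])
    (fun b => ⟨mk b.toList, CommTerm.val_shift b.toList⟩)
  obtain ⟨D, hD⟩ := (hF.image fun t => t.1.length).bddAbove
  refine ⟨fun m => (Q ^ (m + 1)) ^ κ * ℓ, ((ExpBounded.geom Q).pow κ).mul (.const ℓ), Q + D,
    fun m P hP hPconj => ?_⟩
  have hPkey : ∀ p ∈ P, key (CommTerm.cls p.1) ≤ Q ^ (m + 1) := fun p hp => by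
    have hQ : 0 < Q := Nat.pos_of_ne_zero fun h => by
      simpa [h] using (hsys.pos (CommTerm.cls p.1)).trans_le (hkey _)
    exact (hkey _).trans (Nat.pow_le_pow_right hQ (Nat.succ_le_succ (hPconj p hp)))
  obtain ⟨L, hL, hlen, harea, hLF⟩ := hrep (formalSum CommTerm.cls (mk P)) ⟨mk P, hP, rfl⟩ _
    (key_le_of_mem_support_formalSum hPkey)
  have hweight := Nat.mul_le_mul_right ℓ (weight_formalSum_mk_le κ hPkey)
  rw [mul_assoc] at hweight
  refine ⟨L, hL, hlen.trans hweight, harea.mono hweight, fun p hp => ?_⟩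
  obtain ⟨b, hb, t, ht, hpt⟩ := hLF p hp
  have hcard : b.card ≤ Q * (m + 1) := (Nat.pow_le_pow_iff_right one_lt_two).1 <|
    calc 2 ^ b.card ≤ Q ^ (m + 1) := (hscale b).trans hb
      _ ≤ (2 ^ Q) ^ (m + 1) := Nat.pow_le_pow_left Nat.lt_two_pow_self.le _
      _ = 2 ^ (Q * (m + 1)) := (pow_mul _ _ _).symm
  have htD : t.1.length ≤ D := hD ⟨t, ht, rfl⟩
  rw [hpt, CommTerm.shift, List.length_append, Multiset.length_toList, add_mul]
  exact Nat.add_le_add hcard (htD.trans (Nat.le_mul_of_pos_right D m.succ_pos))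

theorem exists_areaLe_pow_of_expVec_eq_zero (hR : R.Finite)
    (hmeta : IsMetabelian (FreeGroup X ⧸ Subgroup.normalClosure R)) :
    ∃ C, 1 ≤ C ∧ ∀ w ∈ Subgroup.normalClosure R, expVec w = 0 →
      AreaLe R w (C ^ (freeNorm w + 1)) := by
  obtain ⟨K, hK, hcost⟩ := CommTerm.exists_areaCommute_areaEq_pow hR hmeta
  obtain ⟨size, hsize, B, hrep⟩ := exists_short_commTerm_representatives R
  obtain ⟨C, hC, hbound⟩ :=
    ((((ExpBounded.id.pow 2).add ((ExpBounded.id.pow 2).mul hsize)).pow 2).mul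
      (.geom (K ^ (2 * (B + 1) + 1)))).add ((ExpBounded.id.pow 2).mul hsize)
  refine ⟨C, hC, fun w hw h0 => ?_⟩
  obtain ⟨W, rfl, hW⟩ := exists_mk_eq_length_eq_freeNorm w
  obtain ⟨P, hP, hPlen, hPconj⟩ := CommTerm.exists_word_of_expVec_eq_zero h0
  rw [← hW]
  rw [← hP] at hw ⊢
  generalize W.length = m at *
  obtain ⟨L, hL, hlen, harea, hLconj⟩ := hrep m P hw hPconj
  have hconj : ∀ p ∈ P ++ L, p.1.1.length ≤ (B + 1) * (m + 1) := fun p hp => by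
    rcases List.mem_append.1 hp with hp | hp
    · have := hPconj p hp
      nlinarith
    · have := hLconj p hp
      nlinarith
  have hsizeP : P.length * size m ≤ m ^ 2 * size m := Nat.mul_le_mul_right (size m) hPlen
  have hpow : K ^ (2 * ((B + 1) * (m + 1)) + 1) ≤ (K ^ (2 * (B + 1) + 1)) ^ (m + 1) := by
    rw [← pow_mul]
    exact Nat.pow_le_pow_right hK (by nlinarith)
  refine (areaLe_lift_mk_of_formalSum_eq
    (fun p hp q hq => (hcost _ p.1 q.1 (hconj p hp) (hconj q hq)).1)
    (fun p hp q hq => (hcost _ p.1 q.1 (hconj p hp) (hconj q hq)).2) hL harea).mono ?_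
  refine le_trans ?_ (hbound m)
  dsimp only
  gcongr
  exact hlen.trans hsizeP

theorem exists_short_areaLe_expVec_eq : ∃ B, ∀ w ∈ Subgroup.normalClosure R, ∃ v,
    freeNorm v ≤ freeNorm w * B ∧ AreaLe R v (freeNorm w * B) ∧ expVec v = expVec w := by
  obtain ⟨k, ⟨f⟩⟩ := Finite.exists_equiv_fin X
  have hsys : IsShiftSystem (fun (_ : Unit) (x : X) => x) (fun x => (f x : ℕ) + 1) fun _ => 1 :=
    isShiftSystem_of_finite ((add_left_injective 1).comp (Fin.val_injective.comp f.injective))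
      fun _ => Nat.succ_pos _
  obtain ⟨ℓ, κ, _, _, hrep⟩ := exists_short_representatives (R := R) (τ := FreeGroup.of) hsys
    (σ := fun _ x => x) (cl := id) (fun _ _ => rfl) fun _ => ⟨1, by simp⟩
  refine ⟨k ^ κ * ℓ, fun w hw => ?_⟩
  obtain ⟨L, rfl, hL⟩ := exists_mk_eq_length_eq_freeNorm w
  obtain ⟨L', hL', hlen, harea, -⟩ := hrep (formalSum id (mk L))
    ⟨mk L, by simpa [FreeGroup.lift_of_eq_id] using hw, rfl⟩ k
    (key_le_of_mem_support_formalSum fun a _ => (f a.1).2)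
  have hweight : weight (fun x => (f x : ℕ) + 1) κ (formalSum id (mk L)) * ℓ ≤
      freeNorm (mk L) * (k ^ κ * ℓ) := by
    rw [← hL, ← mul_assoc]
    exact Nat.mul_le_mul_right ℓ (weight_formalSum_mk_le κ fun a _ => (f a.1).2)
  refine ⟨mk L', (freeNorm_mk_le L').trans (hlen.trans hweight), ?_, ?_⟩
  · simpa [FreeGroup.lift_of_eq_id] using harea.mono hweight
  · rw [← coe_formalSum_id, hL', coe_formalSum_id]

theorem exists_areaLe_pow (hR : R.Finite)
    (hmeta : IsMetabelian (FreeGroup X ⧸ Subgroup.normalClosure R)) :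
    ∃ C, 1 ≤ C ∧ ∀ w ∈ Subgroup.normalClosure R, AreaLe R w (C ^ (freeNorm w + 1)) := by
  obtain ⟨C, hC, hcomm⟩ := exists_areaLe_pow_of_expVec_eq_zero hR hmeta
  obtain ⟨B, hB⟩ := exists_short_areaLe_expVec_eq (R := R)
  obtain ⟨D, hD, hbound⟩ := (ExpBounded.geom (C ^ (B + 1))).add (ExpBounded.id.mul (.const B))
  refine ⟨D, hD, fun w hw => ?_⟩
  obtain ⟨v, hv, harea, hvec⟩ := hB w hw
  have hv' : v ∈ Subgroup.normalClosure R := harea.mem_normalClosure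
  have hwv : AreaLe R (w * v⁻¹) ((C ^ (B + 1)) ^ (freeNorm w + 1)) := by
    refine (hcomm (w * v⁻¹) (mul_mem hw (inv_mem hv')) ?_).mono ?_
    · rw [expVec_mul, expVec_inv, hvec, add_neg_cancel]
    · rw [← pow_mul]
      refine Nat.pow_le_pow_right hC ?_
      have := freeNorm_mul_le w v⁻¹
      rw [freeNorm_inv] at this
      nlinarith
  exact (AreaEq.areaLe hwv harea).mono (hbound (freeNorm w))

theorem dominates_two_pow (hR : R.Finite)
    (hmeta : IsMetabelian (FreeGroup X ⧸ Subgroup.normalClosure R)) {δ : ℕ → ℕ}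
    (hδ : IsDehnFunctionOf R δ) : Dominates δ fun n => 2 ^ n := by
  obtain ⟨C, hC, hfill⟩ := exists_areaLe_pow hR hmeta
  refine Dominates.of_le_mul (pow_right_mono₀ one_le_two) (A := C) (B := C) (C := 0) fun n =>
    (hδ n).2 fun w hw hwn => (hfill w hw).mono ?_
  calc C ^ (freeNorm w + 1) ≤ C ^ (n + 1) := Nat.pow_le_pow_right hC (by omega)
    _ = C * C ^ n := pow_succ' C n
    _ ≤ C * (2 ^ C) ^ n :=
      Nat.mul_le_mul_left C (Nat.pow_le_pow_left Nat.lt_two_pow_self.le n)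
    _ = C * 2 ^ (C * n) + 0 * n := by rw [← pow_mul, zero_mul, add_zero]

end Filling

section Main

variable {X Y : Type*} [Finite X] [Finite Y]

theorem dehn_vs_relative_dehn_general {R : Set (FreeGroup X)} (hR : R.Finite)
    {S : Set (FreeMetabelian Y)}
    (hmeta : IsMetabelian (FreeGroup X ⧸ Subgroup.normalClosure R))
    (hiso : Nonempty ((FreeGroup X ⧸ Subgroup.normalClosure R) ≃*
      (FreeMetabelian Y ⧸ Subgroup.normalClosure S)))
    {δ δt : ℕ → ℕ} (hδ : IsDehnFunctionOf R δ) (hδt : IsRelDehnFunctionOf S δt) :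
    Dominates δt δ ∧ Dominates δ fun n => 2 ^ n :=
  ⟨relative_dominates_absolute hR hiso.some hδ hδt, dominates_two_pow hR hmeta hδ⟩

end Main

/-- For a finitely presented metabelian group `G`, the Dehn function `δ`
of a finite presentation and the relative Dehn function `δ̃` of a finite relative
presentation satisfy `δ̃ ≼ δ` and `δ ≼ max{δ̃(n³)³, 2ⁿ}`. -/
theorem dehn_vs_relative_dehn {X Y : Type} [Finite X] [Finite Y]
    (R : Set (FreeGroup X)) (hR : R.Finite)
    (S : Set (FreeMetabelian Y)) (hS : S.Finite)
    (hmeta : IsMetabelian (FreeGroup X ⧸ Subgroup.normalClosure R))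
    (hiso : Nonempty ((FreeGroup X ⧸ Subgroup.normalClosure R) ≃*
      (FreeMetabelian Y ⧸ Subgroup.normalClosure S)))
    (δ δt : ℕ → ℕ) (hδ : IsDehnFunctionOf R δ) (hδt : IsRelDehnFunctionOf S δt) :
    Dominates δt δ ∧ Dominates δ (fun n => max ((δt (n ^ 3)) ^ 3) (2 ^ n)) := by
  obtain ⟨hrel, C, hC, hbound⟩ := dehn_vs_relative_dehn_general hR hmeta hiso hδ hδt
  refine ⟨hrel, C, hC, fun n => (hbound n).trans ?_⟩
  gcongr
  exact le_max_right _ _
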